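/- arXiv:1606.08546 — 2 statements merged into one kernel-verified Lean document; each statement's English description precedes it below -/
import Mathlib

section
/- (Density Lemma) For each δ > 0, the set 𝒜_δ of δ-approximating functions is dense in the admissible set 𝒜 with respect to the L∞(Ω_T;ℝ²) norm; that is, for every w ∈ 𝒜 and every η > 0 there exists w_η ∈ 𝒜_δ with ‖w_η − w‖_{L∞(Ω_T;ℝ²)} < η. -/
open MeasureTheory Set
open scoped NNReal

noncomputable section

/-- The open space-time domain `Ω_T = (0,1) × (0,T)`. -/
def OmegaT (T : ℝ) : Set (ℝ × ℝ) := Ioo (0:ℝ) 1 ×ˢ Ioo (0:ℝ) T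

/-- The closed space-time domain `cl Ω_T = [0,1] × [0,T]`. -/
def ClOmegaT (T : ℝ) : Set (ℝ × ℝ) := Icc (0:ℝ) 1 ×ˢ Icc (0:ℝ) T

/-- Parabolic α-Hölder continuity on `cl Ω_T`. -/
def ParabolicHolder (α T : ℝ) (g : ℝ → ℝ → ℝ) : Prop :=
  ∃ C : ℝ, ∀ x ∈ Icc (0:ℝ) 1, ∀ y ∈ Icc (0:ℝ) 1, ∀ t ∈ Icc (0:ℝ) T, ∀ s ∈ Icc (0:ℝ) T,
    |g x t - g y s| ≤ C * (|x - y| ^ α + |t - s| ^ (α / 2))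

/-- Hypotheses on the forward-backward diffusion flux `σ`, with derivative function `σ'`
(one-sided derivative on `(-∞,s1]` and `[s2,∞)`). -/
structure FluxHyp (α s1 s2 lam Lam : ℝ) (sigma sigma' : ℝ → ℝ) : Prop where
  alpha_pos : 0 < α
  alpha_lt_one : α < 1
  s1_pos : 0 < s1
  s1_lt_s2 : s1 < s2
  lam_pos : 0 < lam
  lam_le_Lam : lam ≤ Lam
  deriv_left : ∀ s ∈ Iic s1, HasDerivWithinAt sigma (sigma' s) (Iic s1) s
  deriv_right : ∀ s ∈ Ici s2, HasDerivWithinAt sigma (sigma' s) (Ici s2) s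
  holder_left : ∃ C : ℝ, ∀ s ∈ Iic s1, ∀ t ∈ Iic s1, |sigma' s - sigma' t| ≤ C * |s - t| ^ α
  holder_right : ∃ C : ℝ, ∀ s ∈ Ici s2, ∀ t ∈ Ici s2, |sigma' s - sigma' t| ≤ C * |s - t| ^ α
  deriv_pos : ∀ s : ℝ, s < s1 ∨ s2 < s → 0 < sigma' s
  deriv_lb : ∀ s : ℝ, s < s1 / 2 ∨ 2 * s2 < s → lam ≤ sigma' s
  deriv_ub : ∀ s : ℝ, s < s1 / 2 ∨ 2 * s2 < s → sigma' s ≤ Lam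
  sigma_zero : sigma 0 = 0
  sigma_s2_lt_s1 : sigma s2 < sigma s1
  sigma_s2_nonneg : 0 ≤ sigma s2

/-- Hypotheses on the convection coefficient `b` (with spatial derivative `bx`),
reaction coefficient `c`, source `f` and the function `d` with `c = b_x + d(t)`. -/
structure CoeffHyp (α T : ℝ) (b bx c f : ℝ → ℝ → ℝ) (d : ℝ → ℝ) : Prop where
  b_cont : ContinuousOn (fun p : ℝ × ℝ => b p.1 p.2) (ClOmegaT T)
  b_holder : ParabolicHolder α T b
  b_deriv : ∀ p ∈ ClOmegaT T, HasDerivWithinAt (fun y => b y p.2) (bx p.1 p.2) (Icc (0:ℝ) 1) p.1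
  bx_cont : ContinuousOn (fun p : ℝ × ℝ => bx p.1 p.2) (ClOmegaT T)
  c_cont : ContinuousOn (fun p : ℝ × ℝ => c p.1 p.2) (ClOmegaT T)
  c_holder : ParabolicHolder α T c
  f_cont : ContinuousOn (fun p : ℝ × ℝ => f p.1 p.2) (ClOmegaT T)
  f_holder : ParabolicHolder α T f
  d_cont : ContinuousOn d (Icc (0:ℝ) T)
  c_eq : ∀ p ∈ ClOmegaT T, c p.1 p.2 = bx p.1 p.2 + d p.2

/-- Hypotheses on the initial datum `u0 ∈ C^{2+α}([0,1])` with `u0'(0) = u0'(1) = 0`. -/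
structure InitHyp (α : ℝ) (u0 u0' u0'' : ℝ → ℝ) : Prop where
  deriv1 : ∀ x ∈ Icc (0:ℝ) 1, HasDerivWithinAt u0 (u0' x) (Icc (0:ℝ) 1) x
  deriv2 : ∀ x ∈ Icc (0:ℝ) 1, HasDerivWithinAt u0' (u0'' x) (Icc (0:ℝ) 1) x
  holder : ∃ C : ℝ, ∀ x ∈ Icc (0:ℝ) 1, ∀ y ∈ Icc (0:ℝ) 1, |u0'' x - u0'' y| ≤ C * |x - y| ^ α
  compat0 : u0' 0 = 0
  compat1 : u0' 1 = 0

/-- `u` (with a.e. spatial derivative `ux`) is a Lipschitz (weak) solution of the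
initial–Neumann problem for `u_t = (σ(u_x))_x + b u_x + c u + f` on `Ω_T`. -/
def IsLipschitzSolution (T : ℝ) (sigma : ℝ → ℝ) (b c f : ℝ → ℝ → ℝ) (u0 : ℝ → ℝ)
    (u ux : ℝ → ℝ → ℝ) : Prop :=
  (∃ K : ℝ≥0, LipschitzOnWith K (fun p : ℝ × ℝ => u p.1 p.2) (ClOmegaT T)) ∧
  (∀ᵐ p ∂(volume.restrict (OmegaT T)), HasDerivAt (fun y => u y p.2) (ux p.1 p.2) p.1) ∧
  (∀ ζ : ℝ → ℝ → ℝ, ContDiff ℝ (⊤ : ℕ∞) (fun p : ℝ × ℝ => ζ p.1 p.2) →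
    ∀ s ∈ Icc (0:ℝ) T,
      (∫ t in Ioo (0:ℝ) s, ∫ x in Ioo (0:ℝ) 1,
        (u x t * deriv (fun τ => ζ x τ) t - sigma (ux x t) * deriv (fun y => ζ y t) x
          + (b x t * ux x t + c x t * u x t + f x t) * ζ x t))
      = ∫ x in Ioo (0:ℝ) 1, (u x s * ζ x s - u0 x * ζ x 0))

/-- The forward-phase constraint: `u_x ∈ (-∞,s1) ∪ (s2,∞)` a.e. in `Ω_T`. -/
def ForwardRange (T s1 s2 : ℝ) (ux : ℝ → ℝ → ℝ) : Prop :=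
  ∀ᵐ p ∂(volume.restrict (OmegaT T)), ux p.1 p.2 < s1 ∨ s2 < ux p.1 p.2

/-- `F(x,t) = ∫_0^x f(y,t) dy`. -/
def Fint (f : ℝ → ℝ → ℝ) (x t : ℝ) : ℝ := ∫ y in (0:ℝ)..x, f y t

/-- The potential operator `P_u(x,t) = ∫_0^x (c(y,t) - b_y(y,t)) u(y,t) dy`. -/
def Pot (c bx : ℝ → ℝ → ℝ) (u : ℝ → ℝ → ℝ) (x t : ℝ) : ℝ :=
  ∫ y in (0:ℝ)..x, (c y t - bx y t) * u y t

/-- The quantity `v_t - b u - P_u - F` at `(x,t)` (the second coordinate of the gradient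
constraint in the nonlocal differential inclusion). -/
def GVal (b c bx f : ℝ → ℝ → ℝ) (u vt : ℝ → ℝ → ℝ) (x t : ℝ) : ℝ :=
  vt x t - b x t * u x t - Pot c bx u x t - Fint f x t

/-- `Σ0`, the graph of `σ`. -/
def Sigma0 (sigma : ℝ → ℝ) : Set (ℝ × ℝ) := {q | q.2 = sigma q.1}

/-- `U0 = {(s,r) : σ(s2) < r < σ(s1), s_r^- < s < s_r^+}`. -/
def U0set (sigma : ℝ → ℝ) (s1 s2 : ℝ) (sm sp : ℝ → ℝ) : Set (ℝ × ℝ) :=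
  {q | sigma s2 < q.2 ∧ q.2 < sigma s1 ∧ sm q.2 < q.1 ∧ q.1 < sp q.2}

/-- `K0 = {(s,σ(s)) : s ∈ [s1*,s1] ∪ [s2,s2*]}`. -/
def K0set (sigma : ℝ → ℝ) (s1star s1 s2 s2star : ℝ) : Set (ℝ × ℝ) :=
  {q | (q.1 ∈ Icc s1star s1 ∨ q.1 ∈ Icc s2 s2star) ∧ q.2 = sigma q.1}

/-- `w = (u,v)` (with a.e. partial derivatives `ux`, `vx`, `vt`) is a subsolution of the
nonlocal differential inclusion: `v_x = u` and `(u_x, v_t - bu - P_u - F) ∈ Σ0 ∪ U0` a.e. -/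
structure IsSubsolution (T : ℝ) (sigma : ℝ → ℝ) (s1 s2 : ℝ) (sm sp : ℝ → ℝ)
    (b bx c f : ℝ → ℝ → ℝ) (u v ux vx vt : ℝ → ℝ → ℝ) : Prop where
  lip_u : ∃ K : ℝ≥0, LipschitzOnWith K (fun p : ℝ × ℝ => u p.1 p.2) (ClOmegaT T)
  lip_v : ∃ K : ℝ≥0, LipschitzOnWith K (fun p : ℝ × ℝ => v p.1 p.2) (ClOmegaT T)
  du : ∀ᵐ p ∂(volume.restrict (OmegaT T)), HasDerivAt (fun y => u y p.2) (ux p.1 p.2) p.1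
  dvx : ∀ᵐ p ∂(volume.restrict (OmegaT T)), HasDerivAt (fun y => v y p.2) (vx p.1 p.2) p.1
  dvt : ∀ᵐ p ∂(volume.restrict (OmegaT T)), HasDerivAt (fun τ => v p.1 τ) (vt p.1 p.2) p.2
  vx_eq_u : ∀ᵐ p ∂(volume.restrict (OmegaT T)), vx p.1 p.2 = u p.1 p.2
  incl : ∀ᵐ p ∂(volume.restrict (OmegaT T)),
    (ux p.1 p.2, GVal b c bx f u vt p.1 p.2) ∈ Sigma0 sigma ∪ U0set sigma s1 s2 sm sp

/-- The transition set `O^w` of a subsolution `w = (u,v)`. -/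
def TransSet (T : ℝ) (sigma : ℝ → ℝ) (s1star s1 s2 s2star : ℝ) (sm sp : ℝ → ℝ)
    (b bx c f : ℝ → ℝ → ℝ) (u vt ux : ℝ → ℝ → ℝ) : Set (ℝ × ℝ) :=
  {p ∈ OmegaT T | (ux p.1 p.2, GVal b c bx f u vt p.1 p.2)
      ∈ K0set sigma s1star s1 s2 s2star ∪ U0set sigma s1 s2 sm sp}

/-- `Z_w = (u_x - S_w^-)/(S_w^+ - S_w^-)` with `S_w^± = s^±_{v_t - bu - P_u - F}`. -/
def Zfun (sm sp : ℝ → ℝ) (b bx c f : ℝ → ℝ → ℝ) (u vt ux : ℝ → ℝ → ℝ) (p : ℝ × ℝ) : ℝ :=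
  (ux p.1 p.2 - sm (GVal b c bx f u vt p.1 p.2))
    / (sp (GVal b c bx f u vt p.1 p.2) - sm (GVal b c bx f u vt p.1 p.2))

/-- The transition gauge `Γ_w^E = (1/|E|) ∫_E Z_w`. -/
def Gauge (sm sp : ℝ → ℝ) (b bx c f : ℝ → ℝ → ℝ) (u vt ux : ℝ → ℝ → ℝ)
    (E : Set (ℝ × ℝ)) : ℝ :=
  ((volume E).toReal)⁻¹ * ∫ p in E, Zfun sm sp b bx c f u vt ux p

/-- Membership in `C^{2,1}(cl Ω_T)`, with the derivative data `ux`, `uxx`, `ut`. -/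
structure C21 (T : ℝ) (u ux uxx ut : ℝ → ℝ → ℝ) : Prop where
  dx : ∀ p ∈ ClOmegaT T, HasDerivWithinAt (fun y => u y p.2) (ux p.1 p.2) (Icc (0:ℝ) 1) p.1
  dxx : ∀ p ∈ ClOmegaT T, HasDerivWithinAt (fun y => ux y p.2) (uxx p.1 p.2) (Icc (0:ℝ) 1) p.1
  dt : ∀ p ∈ ClOmegaT T, HasDerivWithinAt (fun τ => u p.1 τ) (ut p.1 p.2) (Icc (0:ℝ) T) p.2
  cont : ContinuousOn (fun p : ℝ × ℝ => u p.1 p.2) (ClOmegaT T)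
  cont_x : ContinuousOn (fun p : ℝ × ℝ => ux p.1 p.2) (ClOmegaT T)
  cont_xx : ContinuousOn (fun p : ℝ × ℝ => uxx p.1 p.2) (ClOmegaT T)
  cont_t : ContinuousOn (fun p : ℝ × ℝ => ut p.1 p.2) (ClOmegaT T)

/-- Membership in `C^{3,1}(cl Ω_T)`, with the derivative data `vx`, `vxx`, `vxxx`, `vt`. -/
structure C31 (T : ℝ) (v vx vxx vxxx vt : ℝ → ℝ → ℝ) : Prop where
  dx : ∀ p ∈ ClOmegaT T, HasDerivWithinAt (fun y => v y p.2) (vx p.1 p.2) (Icc (0:ℝ) 1) p.1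
  dxx : ∀ p ∈ ClOmegaT T, HasDerivWithinAt (fun y => vx y p.2) (vxx p.1 p.2) (Icc (0:ℝ) 1) p.1
  dxxx : ∀ p ∈ ClOmegaT T, HasDerivWithinAt (fun y => vxx y p.2) (vxxx p.1 p.2) (Icc (0:ℝ) 1) p.1
  dt : ∀ p ∈ ClOmegaT T, HasDerivWithinAt (fun τ => v p.1 τ) (vt p.1 p.2) (Icc (0:ℝ) T) p.2
  cont : ContinuousOn (fun p : ℝ × ℝ => v p.1 p.2) (ClOmegaT T)
  cont_x : ContinuousOn (fun p : ℝ × ℝ => vx p.1 p.2) (ClOmegaT T)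
  cont_xx : ContinuousOn (fun p : ℝ × ℝ => vxx p.1 p.2) (ClOmegaT T)
  cont_xxx : ContinuousOn (fun p : ℝ × ℝ => vxxx p.1 p.2) (ClOmegaT T)
  cont_t : ContinuousOn (fun p : ℝ × ℝ => vt p.1 p.2) (ClOmegaT T)

/-- `Ω¹_T = {(x,t) ∈ Ω_T : u*_x(x,t) < s^-_{r1}}`. -/
def Omega1 (T smr1 : ℝ) (usx : ℝ → ℝ → ℝ) : Set (ℝ × ℝ) :=
  {p ∈ OmegaT T | usx p.1 p.2 < smr1}

/-- `Ω²_T = {(x,t) ∈ Ω_T : s^-_{r1} < u*_x(x,t) < s^+_{r2}}`. -/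
def Omega2 (T smr1 spr2 : ℝ) (usx : ℝ → ℝ → ℝ) : Set (ℝ × ℝ) :=
  {p ∈ OmegaT T | smr1 < usx p.1 p.2 ∧ usx p.1 p.2 < spr2}

/-- `Ω³_T = {(x,t) ∈ Ω_T : u*_x(x,t) > s^+_{r2}}`. -/
def Omega3 (T spr2 : ℝ) (usx : ℝ → ℝ → ℝ) : Set (ℝ × ℝ) :=
  {p ∈ OmegaT T | spr2 < usx p.1 p.2}

/-- `Ω^{0,-}_T = {(x,t) ∈ Ω_T : u*_x(x,t) = s^-_{r1}}`. -/
def Omega0m (T smr1 : ℝ) (usx : ℝ → ℝ → ℝ) : Set (ℝ × ℝ) :=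
  {p ∈ OmegaT T | usx p.1 p.2 = smr1}

/-- `Ω^{0,+}_T = {(x,t) ∈ Ω_T : u*_x(x,t) = s^+_{r2}}`. -/
def Omega0p (T spr2 : ℝ) (usx : ℝ → ℝ → ℝ) : Set (ℝ × ℝ) :=
  {p ∈ OmegaT T | usx p.1 p.2 = spr2}

/-- The `L∞(Ω_T)` norm (essential supremum over `Ω_T` of the absolute value). -/
def EssSupAbs (T : ℝ) (g : ℝ → ℝ → ℝ) : ℝ :=
  essSup (fun p : ℝ × ℝ => |g p.1 p.2|) (volume.restrict (OmegaT T))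

/-- Hypotheses on the modified flux `σ̃ ∈ C^{1+α}(ℝ)` (with derivative `σ̃'`). -/
structure TildeHyp (α r1 r2 lamt Lamt : ℝ) (sigma sm sp sigmat sigmat' : ℝ → ℝ) : Prop where
  deriv : ∀ s : ℝ, HasDerivAt sigmat (sigmat' s) s
  holder : ∃ C : ℝ, ∀ s t : ℝ, |sigmat' s - sigmat' t| ≤ C * |s - t| ^ α
  eq_left : ∀ s : ℝ, s ≤ sm r1 → sigmat s = sigma s
  eq_right : ∀ s : ℝ, sp r2 ≤ s → sigmat s = sigma s
  lt_mid : ∀ s : ℝ, sm r1 < s → s ≤ sm r2 → sigmat s < sigma s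
  gt_mid : ∀ s : ℝ, sp r1 ≤ s → s < sp r2 → sigma s < sigmat s
  lamt_pos : 0 < lamt
  lamt_le_Lamt : lamt ≤ Lamt
  deriv_lb : ∀ s : ℝ, lamt ≤ sigmat' s
  deriv_ub : ∀ s : ℝ, sigmat' s ≤ Lamt

/-- `u*` is the classical solution in `C^{2+α,1+α/2}(cl Ω_T)` of the modified problem. -/
structure StarSol (α T : ℝ) (sigmat sigmat' : ℝ → ℝ) (b bx c f : ℝ → ℝ → ℝ) (u0 : ℝ → ℝ)
    (us usx usxx ust : ℝ → ℝ → ℝ) : Prop where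
  reg : C21 T us usx usxx ust
  holder_xx : ParabolicHolder α T usxx
  holder_t : ParabolicHolder α T ust
  pde : ∀ p ∈ OmegaT T, ust p.1 p.2 =
    sigmat' (usx p.1 p.2) * usxx p.1 p.2 + b p.1 p.2 * usx p.1 p.2
      + c p.1 p.2 * us p.1 p.2 + f p.1 p.2
  ic : ∀ x ∈ Icc (0:ℝ) 1, us x 0 = u0 x
  bc : ∀ t ∈ Icc (0:ℝ) T, usx 0 t = 0 ∧ usx 1 t = 0

/-- The auxiliary function
`v*(x,t) = ∫_0^t (σ̃(u*_x) + b u* + P_{u*} + F)(x,τ) dτ + ∫_0^x u0(y) dy`. -/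
def VStar (sigmat : ℝ → ℝ) (b bx c f : ℝ → ℝ → ℝ) (u0 : ℝ → ℝ) (us usx : ℝ → ℝ → ℝ)
    (x t : ℝ) : ℝ :=
  (∫ τ in (0:ℝ)..t, (sigmat (usx x τ) + b x τ * us x τ + Pot c bx us x τ + Fint f x τ))
    + ∫ y in (0:ℝ)..x, u0 y

/-- The classical time derivative of `v*`: `v*_t = σ̃(u*_x) + b u* + P_{u*} + F`. -/
def VStarT (sigmat : ℝ → ℝ) (b bx c f : ℝ → ℝ → ℝ) (us usx : ℝ → ℝ → ℝ) (x t : ℝ) : ℝ :=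
  sigmat (usx x t) + b x t * us x t + Pot c bx us x t + Fint f x t

/-- A `2×2` matrix `(a b; c d)` regarded as a point of Euclidean `ℝ⁴`, so that the Euclidean
distance is the Hilbert–Schmidt distance. -/
def mk4 (a b c d : ℝ) : EuclideanSpace ℝ (Fin 4) :=
  (WithLp.equiv 2 (Fin 4 → ℝ)).symm ![a, b, c, d]

/-- `K' = {(s,σ(s)) : s ∈ [s^-_{r1}, s^-_{r2}] ∪ [s^+_{r1}, s^+_{r2}]}`. -/
def Kprime (sigma : ℝ → ℝ) (sm sp : ℝ → ℝ) (r1 r2 : ℝ) : Set (ℝ × ℝ) :=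
  {q | (q.1 ∈ Icc (sm r1) (sm r2) ∨ q.1 ∈ Icc (sp r1) (sp r2)) ∧ q.2 = sigma q.1}

/-- `U' = {(s,r) : r1 < r < r2, s_r^- < s < s_r^+}`. -/
def Uprime (sm sp : ℝ → ℝ) (r1 r2 : ℝ) : Set (ℝ × ℝ) :=
  {q | r1 < q.2 ∧ q.2 < r2 ∧ sm q.2 < q.1 ∧ q.1 < sp q.2}

/-- The compact matrix set `K((x,t);u)` (as a subset of Euclidean `ℝ⁴`). -/
def KmatSet (sigma sm sp : ℝ → ℝ) (r1 r2 mstar : ℝ) (b c bx f : ℝ → ℝ → ℝ)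
    (u : ℝ → ℝ → ℝ) (x t : ℝ) : Set (EuclideanSpace ℝ (Fin 4)) :=
  {A | ∃ s c' q : ℝ, A = mk4 s c' (u x t) q ∧ |c'| ≤ mstar ∧
    (s, q - b x t * u x t - Pot c bx u x t - Fint f x t) ∈ Kprime sigma sm sp r1 r2}

/-- The condition `∇w(x,t) ∈ U((x,t);u)` for `w = (u,v)` with gradient data
`ux, ut, vx, vt`. -/
def GradInU (r1 r2 mstar : ℝ) (sm sp : ℝ → ℝ) (b c bx f : ℝ → ℝ → ℝ)
    (u ux ut vx vt : ℝ → ℝ → ℝ) (p : ℝ × ℝ) : Prop :=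
  vx p.1 p.2 = u p.1 p.2 ∧ |ut p.1 p.2| < mstar ∧
    (ux p.1 p.2, GVal b c bx f u vt p.1 p.2) ∈ Uprime sm sp r1 r2

/-- A pair `w = (u,v)` together with all relevant partial-derivative data. -/
structure PairData where
  u : ℝ → ℝ → ℝ
  ux : ℝ → ℝ → ℝ
  uxx : ℝ → ℝ → ℝ
  ut : ℝ → ℝ → ℝ
  v : ℝ → ℝ → ℝ
  vx : ℝ → ℝ → ℝ
  vxx : ℝ → ℝ → ℝ
  vxxx : ℝ → ℝ → ℝ
  vt : ℝ → ℝ → ℝ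

/-- Membership in the admissible set `𝒜` of subsolutions. Here `us, usx, ust` are the data of
`u*`, `vs` is `v*`, `E = Ω²_T`, `mstar = m*` and `GammaStar = Γ_{w*}^E`. -/
def InAdmissible (T r1 r2 mstar ε GammaStar : ℝ) (sigma sm sp : ℝ → ℝ)
    (b bx c f : ℝ → ℝ → ℝ) (us ust vs : ℝ → ℝ → ℝ) (E : Set (ℝ × ℝ))
    (W : PairData) : Prop :=
  C21 T W.u W.ux W.uxx W.ut ∧
  C31 T W.v W.vx W.vxx W.vxxx W.vt ∧
  (∃ O : Set (ℝ × ℝ), IsOpen O ∧ closure O ⊆ E ∧ IsCompact (closure O) ∧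
    volume (frontier O) = 0 ∧
    (∀ p ∈ OmegaT T \ closure O, W.u p.1 p.2 = us p.1 p.2 ∧ W.v p.1 p.2 = vs p.1 p.2) ∧
    (∀ p ∈ OmegaT T \ closure O, Pot c bx W.u p.1 p.2 = Pot c bx us p.1 p.2)) ∧
  EssSupAbs T (fun x t => W.u x t - us x t) < ε / 2 ∧
  EssSupAbs T (fun x t => W.ut x t - ust x t) < ε / 2 ∧
  (∀ p ∈ E, GradInU r1 r2 mstar sm sp b c bx f W.u W.ux W.ut W.vx W.vt p) ∧
  |Gauge sm sp b bx c f W.u W.vt W.ux E - GammaStar| < ε / 2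

/-- Membership in the set `𝒜_δ` of `δ`-approximating subsolutions (the extra integral
condition beyond membership in `𝒜`). -/
def DeltaApproxCond (r1 r2 mstar δ : ℝ) (sigma sm sp : ℝ → ℝ)
    (b bx c f : ℝ → ℝ → ℝ) (E : Set (ℝ × ℝ)) (W : PairData) : Prop :=
  (∫ p in E, Metric.infDist
      (mk4 (W.ux p.1 p.2) (W.ut p.1 p.2) (W.vx p.1 p.2) (W.vt p.1 p.2))
      (KmatSet sigma sm sp r1 r2 mstar b c bx f W.u p.1 p.2))
    ≤ δ * (volume E).toReal

open Filter Topology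

/-- Riemann-Lebesgue in the first variable. -/
lemma rl_exp (g : ℝ × ℝ → ℂ) (k : ℝ) (hk : 0 < k) :
    Tendsto (fun n : ℕ => ∫ p : ℝ × ℝ, Complex.exp ((k * n * p.1 : ℝ) * Complex.I) * g p)
      atTop (𝓝 0) := by
  have h := tendsto_integral_exp_smul_cocompact g (volume : Measure (ℝ × ℝ))
  let L : ℕ → StrongDual ℝ (ℝ × ℝ) := fun n =>
    (-(k * n / (2 * Real.pi)) : ℝ) • ContinuousLinearMap.fst ℝ ℝ ℝ
  have hL : Tendsto L atTop (cocompact _) := by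
    rw [← Metric.cobounded_eq_cocompact, ← tendsto_norm_atTop_iff_cobounded]
    have : Tendsto (fun n : ℕ => (n : ℝ) * (k / (2 * Real.pi) * ‖ContinuousLinearMap.fst ℝ ℝ ℝ‖))
        atTop atTop := by
      apply Tendsto.atTop_mul_const
      · have : (0:ℝ) < ‖ContinuousLinearMap.fst ℝ ℝ ℝ‖ := by
          rw [norm_pos_iff]
          intro h0
          have := congrArg (fun l : StrongDual ℝ (ℝ × ℝ) => l (1, 0)) h0
          simp at this
        have := Real.pi_pos
        positivity
      · exact tendsto_natCast_atTop_atTop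
    refine this.congr fun n => ?_
    simp only [L]
    rw [norm_smul, norm_neg, Real.norm_of_nonneg (by have := Real.pi_pos; positivity)]
    ring
  refine (h.comp hL).congr fun n => ?_
  simp only [Function.comp, L]
  congr 1
  ext p
  rw [Circle.smul_def, smul_eq_mul, Real.fourierChar_apply]
  congr 2
  push_cast
  simp
  field_simp

lemma rl_sin (E : Set (ℝ × ℝ)) (hE : MeasurableSet E) (g : ℝ × ℝ → ℝ) (hg : IntegrableOn g E)
    (k : ℝ) (hk : 0 < k) :
    Tendsto (fun n : ℕ => ∫ p in E, g p * Real.sin (k * n * p.1)) atTop (𝓝 0) := by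
  have h := rl_exp (fun p => ((E.indicator g p : ℝ) : ℂ)) k hk
  have h2 := (Complex.continuous_im.tendsto _).comp h
  simp only [Complex.zero_im] at h2
  refine h2.congr fun n => ?_
  simp only [Function.comp]
  rw [← integral_indicator hE]
  have hi : Integrable (fun p : ℝ × ℝ =>
      Complex.exp ((k * n * p.1 : ℝ) * Complex.I) * ((E.indicator g p : ℝ) : ℂ)) := by
    refine Integrable.bdd_mul (c := 1) ((integrable_indicator_iff hE).2 hg).ofReal ?_ ?_
    · apply Continuous.aestronglyMeasurable; fun_prop
    · exact Eventually.of_forall fun p => by rw [Complex.norm_exp_ofReal_mul_I]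
  have := integral_im hi
  simp only [RCLike.im_to_complex] at this
  rw [← this]
  congr 1
  ext p
  by_cases hp : p ∈ E
  · rw [indicator_of_mem hp, indicator_of_mem hp, Complex.im_mul_ofReal,
      Complex.exp_ofReal_mul_I_im, mul_comm]
  · simp [hp]

lemma rl_cos (E : Set (ℝ × ℝ)) (hE : MeasurableSet E) (g : ℝ × ℝ → ℝ) (hg : IntegrableOn g E)
    (k : ℝ) (hk : 0 < k) :
    Tendsto (fun n : ℕ => ∫ p in E, g p * Real.cos (k * n * p.1)) atTop (𝓝 0) := by
  have h := rl_exp (fun p => ((E.indicator g p : ℝ) : ℂ)) k hk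
  have h2 := (Complex.continuous_re.tendsto _).comp h
  simp only [Complex.zero_re] at h2
  refine h2.congr fun n => ?_
  simp only [Function.comp]
  rw [← integral_indicator hE]
  have hi : Integrable (fun p : ℝ × ℝ =>
      Complex.exp ((k * n * p.1 : ℝ) * Complex.I) * ((E.indicator g p : ℝ) : ℂ)) := by
    refine Integrable.bdd_mul (c := 1) ((integrable_indicator_iff hE).2 hg).ofReal ?_ ?_
    · apply Continuous.aestronglyMeasurable; fun_prop
    · exact Eventually.of_forall fun p => by rw [Complex.norm_exp_ofReal_mul_I]
  have := integral_re hi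
  simp only [RCLike.re_to_complex] at this
  rw [← this]
  congr 1
  ext p
  by_cases hp : p ∈ E
  · rw [indicator_of_mem hp, indicator_of_mem hp, Complex.re_mul_ofReal,
      Complex.exp_ofReal_mul_I_re, mul_comm]
  · simp [hp]

lemma cont_param (T : ℝ) (hT : 0 < T) (g : ℝ → ℝ → ℝ)
    (hg : ContinuousOn (fun p : ℝ × ℝ => g p.1 p.2) (ClOmegaT T)) :
    ContinuousOn (fun p : ℝ × ℝ => ∫ y in (0:ℝ)..p.1, g y p.2) (ClOmegaT T) := by
  let G : ℝ × ℝ → ℝ → ℝ := fun p y => g (max 0 (min 1 y)) (max 0 (min T p.2))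
  have hG : Continuous G.uncurry := by
    have : Continuous fun q : (ℝ × ℝ) × ℝ => ((max 0 (min 1 q.2), max 0 (min T q.1.2)) : ℝ × ℝ) := by
      fun_prop
    refine hg.comp_continuous this fun q => ?_
    simp [ClOmegaT, hT.le]
  have := intervalIntegral.continuous_parametric_intervalIntegral_of_continuous (μ := volume)
    (a₀ := 0) hG (s := fun p : ℝ × ℝ => p.1) continuous_fst
  refine this.continuousOn.congr fun p hp => ?_
  obtain ⟨⟨h0, h1⟩, h2, h3⟩ := hp
  apply intervalIntegral.integral_congr
  intro y hy
  rw [uIcc_of_le h0] at hy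
  simp only [G]
  rw [min_eq_right (hy.2.trans h1), max_eq_right hy.1, min_eq_right h3, max_eq_right h2]

lemma cover_null (E : Set (ℝ × ℝ)) (hE : IsOpen E) (S : Set (ℝ × ℝ)) (hS : IsCompact S)
    (hSE : S ⊆ E) :
    ∃ V : Set (ℝ × ℝ), IsOpen V ∧ S ⊆ V ∧ closure V ⊆ E ∧ IsCompact (closure V) ∧
      volume (frontier V) = 0 := by
  refine hS.induction_on (p := fun S => ∃ V : Set (ℝ × ℝ), IsOpen V ∧ S ⊆ V ∧ closure V ⊆ E ∧
    IsCompact (closure V) ∧ volume (frontier V) = 0) ?_ ?_ ?_ ?_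
  · exact ⟨∅, by simp⟩
  · rintro s t hst ⟨V, h1, h2, h3⟩
    exact ⟨V, h1, hst.trans h2, h3⟩
  · rintro s t ⟨V, h1, h2, h3, h4, h5⟩ ⟨V', h1', h2', h3', h4', h5'⟩
    refine ⟨V ∪ V', h1.union h1', union_subset_union h2 h2', ?_, ?_, ?_⟩
    · rw [closure_union]; exact union_subset h3 h3'
    · rw [closure_union]; exact h4.union h4'
    · refine measure_mono_null ((frontier_union_subset V V').trans
        (union_subset_union inter_subset_left inter_subset_right)) ?_
      exact measure_union_null h5 h5'
  · intro x hx
    obtain ⟨r, hr, hrE⟩ := Metric.nhds_basis_closedBall.mem_iff.1 (hE.mem_nhds (hSE hx))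
    refine ⟨Metric.ball x r, mem_nhdsWithin_of_mem_nhds (Metric.ball_mem_nhds x hr),
      Metric.ball x r, Metric.isOpen_ball, subset_rfl, ?_, ?_, ?_⟩
    · exact Metric.closure_ball_subset_closedBall.trans hrE
    · exact (isCompact_closedBall x r).of_isClosed_subset isClosed_closure
        Metric.closure_ball_subset_closedBall
    · exact (convex_ball x r).addHaar_frontier volume

open scoped Manifold ContDiff in
lemma exists_psi (E : Set (ℝ × ℝ)) (hE : IsOpen E) (hfin : volume E ≠ ⊤) (m : ℝ × ℝ → ℝ) (M : ℝ)
    (hm : ContinuousOn m E) (hpos : ∀ p ∈ E, 0 < m p) (hM : ∀ p ∈ E, m p ≤ M)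
    (hmI : IntegrableOn m E) (hI : 0 < ∫ p in E, m p) :
    ∃ ψ : ℝ × ℝ → ℝ, ContDiff ℝ ∞ ψ ∧ HasCompactSupport ψ ∧ tsupport ψ ⊆ E ∧ (∀ p, 0 ≤ ψ p) ∧
      (∀ p ∈ E, ψ p < m p) ∧ 3 / 4 * ∫ p in E, m p ≤ ∫ p in E, ψ p := by
  set I := ∫ p in E, m p with hIdef
  have hM0 : 0 < M := by
    by_contra hcon
    have : ∫ p in E, m p ≤ 0 := by
      apply setIntegral_nonpos hE.measurableSet
      intro p hp; linarith [hM p hp]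
    linarith
  obtain ⟨C, hCE, hC, hCm⟩ : ∃ C ⊆ E, IsCompact C ∧ volume E < volume C + ENNReal.ofReal (I / (10 * M)) := by
    apply hE.measurableSet.exists_isCompact_lt_add hfin
    simp; positivity
  obtain ⟨K, hK, hCK, hKE⟩ := exists_compact_between hC hE hCE
  obtain ⟨χ, hχs, hχr, hχsup, hχ1⟩ := exists_contMDiff_support_eq_eq_one_iff (n := (⊤ : ℕ∞)) 𝓘(ℝ, ℝ × ℝ)
    (isOpen_interior (s := K)) hC.isClosed hCK
  have hχs : ContDiff ℝ ∞ χ := hχs.contDiff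
  have htK : tsupport χ ⊆ K := by
    rw [tsupport, hχsup]
    exact closure_minimal interior_subset hK.isClosed
  obtain ⟨g, hg⟩ := exists_contMDiffMap_forall_mem_convex_of_local_const (n := (⊤ : ℕ∞)) (F := ℝ) 𝓘(ℝ, ℝ × ℝ)
    (t := fun y => {z | y ∈ K → 9 / 10 * m y < z ∧ z < m y}) (by
      intro y
      by_cases hy : y ∈ K
      · simp only [hy, true_imp_iff]; exact convex_Ioo _ _
      · simp only [hy, false_imp_iff]; exact convex_univ) (by
      intro y
      by_cases hy : y ∈ K
      · refine ⟨19 / 20 * m y, ?_⟩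
        have hc := hm.continuousAt (hE.mem_nhds (hKE hy))
        have h0 := hpos y (hKE hy)
        have e1 := hc.eventually_lt_const (show m y < 19 / 18 * m y by linarith)
        have e2 := hc.eventually_const_lt (show 19 / 20 * m y < m y by linarith)
        filter_upwards [e1, e2] with z h1 h2 _
        constructor <;> linarith
      · refine ⟨0, ?_⟩
        filter_upwards [hK.isClosed.isOpen_compl.mem_nhds hy] with z hz h
        exact absurd h hz)
  have hgs : ContDiff ℝ ∞ (g : ℝ × ℝ → ℝ) := g.contMDiff.contDiff
  have hcs : HasCompactSupport (fun p => χ p * g p) := by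
    apply HasCompactSupport.mul_right
    exact hK.of_isClosed_subset (isClosed_tsupport _) htK
  have hχ01 : ∀ p, 0 ≤ χ p ∧ χ p ≤ 1 := fun p => hχr ⟨p, rfl⟩
  have hχ0 : ∀ p, p ∉ K → χ p = 0 := fun p hp => by
    by_contra h
    exact hp (htK (subset_tsupport _ h))
  have hnn : ∀ p, 0 ≤ χ p * g p := by
    intro p
    by_cases hp : p ∈ K
    · have := hg p hp
      have := hpos p (hKE hp)
      exact mul_nonneg (hχ01 p).1 (by linarith)
    · simp [hχ0 p hp]
  have hpsi : ContDiff ℝ ∞ (fun p => χ p * g p) := hχs.mul hgs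
  refine ⟨fun p => χ p * g p, hpsi, hcs, ?_, hnn, ?_, ?_⟩
  · exact ((tsupport_mul_subset_left).trans htK).trans hKE
  · intro p hpE
    by_cases hp : p ∈ K
    · have h1 := hg p hp
      have := hpos p hpE
      have : χ p * g p ≤ 1 * g p := mul_le_mul_of_nonneg_right (hχ01 p).2 (by linarith)
      linarith
    · simp [hχ0 p hp, hpos p hpE]
  · have hpi : Integrable (fun p => χ p * g p) := hpsi.continuous.integrable_of_hasCompactSupport hcs
    have hCint : IntegrableOn m C := hmI.mono_set hCE
    have a1 : ∫ p in C, χ p * g p ≤ ∫ p in E, χ p * g p :=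
      setIntegral_mono_set hpi.integrableOn (Eventually.of_forall hnn) hCE.eventuallyLE
    have a2 : ∫ p in C, 9 / 10 * m p ≤ ∫ p in C, χ p * g p := by
      apply setIntegral_mono_on (hCint.const_mul _) hpi.integrableOn hC.measurableSet
      intro p hp
      rw [(hχ1 p).1 hp, one_mul]
      exact (hg p (interior_subset (hCK hp))).1.le
    rw [integral_const_mul] at a2
    have a3 : ∫ p in E \ C, m p = I - ∫ p in C, m p := setIntegral_sdiff hC.measurableSet hmI hCE
    have a4 : ∫ p in E \ C, m p ≤ ∫ p in E \ C, M := by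
      apply setIntegral_mono_on (hmI.mono_set sdiff_subset) _ (hE.measurableSet.diff hC.measurableSet)
      · intro p hp; exact hM p hp.1
      · exact integrableOn_const ((measure_mono sdiff_subset).trans_lt hfin.lt_top).ne
    have a5 : (volume (E \ C)).toReal ≤ I / (10 * M) := by
      have : volume (E \ C) ≤ ENNReal.ofReal (I / (10 * M)) := by
        rw [measure_sdiff hCE hC.measurableSet.nullMeasurableSet hC.measure_lt_top.ne]
        exact tsub_le_iff_left.2 hCm.le
      exact ENNReal.toReal_le_of_le_ofReal (by positivity) this
    rw [setIntegral_const, smul_eq_mul, Measure.real] at a4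
    have a6 : (volume (E \ C)).toReal * M ≤ I / 10 := by
      calc _ ≤ I / (10 * M) * M := mul_le_mul_of_nonneg_right a5 hM0.le
        _ = I / 10 := by field_simp
    linarith

open scoped ContDiff in
lemma exists_partials (ψ : ℝ × ℝ → ℝ) (h : ContDiff ℝ ∞ ψ) :
    ∃ ψx ψt : ℝ × ℝ → ℝ, ContDiff ℝ ∞ ψx ∧ ContDiff ℝ ∞ ψt ∧
      (∀ x t, HasDerivAt (fun y => ψ (y, t)) (ψx (x, t)) x) ∧
      (∀ x t, HasDerivAt (fun τ => ψ (x, τ)) (ψt (x, t)) t) ∧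
      (∀ p ∉ tsupport ψ, ψx p = 0 ∧ ψt p = 0) ∧ tsupport ψx ⊆ tsupport ψ := by
  have hz : ∀ p ∉ tsupport ψ, fderiv ℝ ψ p = 0 := fun p hp => by
    by_contra hne
    exact hp (support_fderiv_subset ℝ (f := ψ) hne)
  have hd : ContDiff ℝ ∞ (fderiv ℝ ψ) := h.fderiv_right (by simp)
  refine ⟨fun p => fderiv ℝ ψ p (1, 0), fun p => fderiv ℝ ψ p (0, 1), ?_, ?_, ?_, ?_, ?_, ?_⟩
  · exact hd.clm_apply contDiff_const
  · exact hd.clm_apply contDiff_const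
  · intro x t
    have h1 : HasFDerivAt ψ (fderiv ℝ ψ (x, t)) (x, t) :=
      (h.differentiable (by simp) _).hasFDerivAt
    exact h1.comp_hasDerivAt x ((hasDerivAt_id x).prodMk (hasDerivAt_const x t))
  · intro x t
    have h1 : HasFDerivAt ψ (fderiv ℝ ψ (x, t)) (x, t) :=
      (h.differentiable (by simp) _).hasFDerivAt
    exact h1.comp_hasDerivAt t ((hasDerivAt_const t x).prodMk (hasDerivAt_id t))
  · intro p hp
    simp [hz p hp]
  · apply closure_minimal _ (isClosed_tsupport _)
    intro p hp
    by_contra hne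
    exact hp (by simp [hz p hne])

/-- A smooth localized perturbation with its derivative data, vanishing off `S`. -/
structure Pert (S : Set (ℝ × ℝ)) (φ φx φxx φxxx φt φxt : ℝ → ℝ → ℝ) : Prop where
  dx : ∀ x t, HasDerivAt (fun y => φ y t) (φx x t) x
  dxx : ∀ x t, HasDerivAt (fun y => φx y t) (φxx x t) x
  dxxx : ∀ x t, HasDerivAt (fun y => φxx y t) (φxxx x t) x
  dt : ∀ x t, HasDerivAt (fun τ => φ x τ) (φt x t) t
  dxt : ∀ x t, HasDerivAt (fun τ => φx x τ) (φxt x t) t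
  c0 : Continuous (fun p : ℝ × ℝ => φ p.1 p.2)
  cx : Continuous (fun p : ℝ × ℝ => φx p.1 p.2)
  cxx : Continuous (fun p : ℝ × ℝ => φxx p.1 p.2)
  cxxx : Continuous (fun p : ℝ × ℝ => φxxx p.1 p.2)
  ct : Continuous (fun p : ℝ × ℝ => φt p.1 p.2)
  cxt : Continuous (fun p : ℝ × ℝ => φxt p.1 p.2)
  z : ∀ x t, (x, t) ∉ S → φ x t = 0 ∧ φx x t = 0 ∧ φxx x t = 0 ∧ φt x t = 0 ∧ φxt x t = 0

open scoped ContDiff in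
lemma exists_pert (ψ : ℝ × ℝ → ℝ) (h : ContDiff ℝ ∞ ψ) (hc : HasCompactSupport ψ) :
    ∃ (φ φx φxx φxxx φt φxt : ℕ → ℝ → ℝ → ℝ) (C : ℝ), 0 ≤ C ∧ ∀ n : ℕ, 1 ≤ n →
      Pert (tsupport ψ) (φ n) (φx n) (φxx n) (φxxx n) (φt n) (φxt n) ∧
      ∀ x t, |φ n x t| ≤ C / n ∧ |φx n x t| ≤ C / n ∧ |φt n x t| ≤ C / n ∧ |φxt n x t| ≤ C / n ∧
        |φxx n x t - ψ (x, t) * Real.sin (n * x)| ≤ C / n := by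
  obtain ⟨ψx, ψt, hx, ht, dx, dt, z1, s1⟩ := exists_partials ψ h
  obtain ⟨ψxx, ψxt, hxx, hxt, dxx, dxt, z2, s2⟩ := exists_partials ψx hx
  obtain ⟨ψxxx, ψxxt, hxxx, hxxt, dxxx, dxxt, z3, s3⟩ := exists_partials ψxx hxx
  have z2' : ∀ p ∉ tsupport ψ, ψxx p = 0 ∧ ψxt p = 0 := fun p hp => z2 p fun h => hp (s1 h)
  have bd : ∀ g : ℝ × ℝ → ℝ, ContDiff ℝ ∞ g → (∀ p ∉ tsupport ψ, g p = 0) → ∃ B, 0 ≤ B ∧ ∀ p, |g p| ≤ B := by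
    intro g hg hz
    have : HasCompactSupport g := HasCompactSupport.intro hc hz
    obtain ⟨B, hB⟩ := this.exists_bound_of_continuous hg.continuous
    exact ⟨B, (norm_nonneg _).trans (hB 0), hB⟩
  have z0 : ∀ p ∉ tsupport ψ, ψ p = 0 := fun p hp => image_eq_zero_of_notMem_tsupport hp
  obtain ⟨B0, p0, b0⟩ := bd ψ h z0
  obtain ⟨B1, p1, b1⟩ := bd ψx hx fun p hp => (z1 p hp).1
  obtain ⟨B2, p2, b2⟩ := bd ψt ht fun p hp => (z1 p hp).2
  obtain ⟨B3, p3, b3⟩ := bd ψxx hxx fun p hp => (z2' p hp).1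
  obtain ⟨B4, p4, b4⟩ := bd ψxt hxt fun p hp => (z2' p hp).2
  have c0 := h.continuous
  have c1 := hx.continuous
  have c2 := ht.continuous
  have c3 := hxx.continuous
  have c4 := hxt.continuous
  have c5 := hxxx.continuous
  refine ⟨fun n x t => -(1 / (n:ℝ)) ^ 2 * (ψ (x, t) * Real.sin (n * x)),
    fun n x t => -(1 / (n:ℝ)) ^ 2 * (ψx (x, t) * Real.sin (n * x))
      + -(1 / (n:ℝ)) * (ψ (x, t) * Real.cos (n * x)),
    fun n x t => -(1 / (n:ℝ)) ^ 2 * (ψxx (x, t) * Real.sin (n * x))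
      + -(1 / (n:ℝ)) * (2 * (ψx (x, t) * Real.cos (n * x))) + ψ (x, t) * Real.sin (n * x),
    fun n x t => -(1 / (n:ℝ)) ^ 2 * (ψxxx (x, t) * Real.sin (n * x))
      + -(1 / (n:ℝ)) * (3 * (ψxx (x, t) * Real.cos (n * x))) + 3 * (ψx (x, t) * Real.sin (n * x))
      + n * (ψ (x, t) * Real.cos (n * x)),
    fun n x t => -(1 / (n:ℝ)) ^ 2 * (ψt (x, t) * Real.sin (n * x)),
    fun n x t => -(1 / (n:ℝ)) ^ 2 * (ψxt (x, t) * Real.sin (n * x))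
      + -(1 / (n:ℝ)) * (ψt (x, t) * Real.cos (n * x)),
    B0 + 2 * B1 + B2 + B3 + B4, by positivity, ?_⟩
  intro n hn
  have hn1 : (1:ℝ) ≤ n := by exact_mod_cast hn
  have hn0 : (n:ℝ) ≠ 0 := by positivity
  have ds : ∀ x : ℝ, HasDerivAt (fun y : ℝ => Real.sin (n * y)) (Real.cos (n * x) * n) x := fun x => by
    simpa using ((hasDerivAt_id x).const_mul (n:ℝ)).sin
  have dc : ∀ x : ℝ, HasDerivAt (fun y : ℝ => Real.cos (n * y)) (-Real.sin (n * x) * n) x := fun x => by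
    simpa using ((hasDerivAt_id x).const_mul (n:ℝ)).cos
  refine ⟨⟨?_, ?_, ?_, ?_, ?_, by fun_prop, by fun_prop, by fun_prop, by fun_prop, by fun_prop,
    by fun_prop, ?_⟩, ?_⟩
  · intro x t
    refine (((dx x t).mul (ds x)).const_mul _).congr_deriv ?_
    field_simp; ring
  · intro x t
    refine ((((dxx x t).mul (ds x)).const_mul _).add
      (((dx x t).mul (dc x)).const_mul _)).congr_deriv ?_
    field_simp; ring
  · intro x t
    refine (((((dxxx x t).mul (ds x)).const_mul _).add
      ((((dxx x t).mul (dc x)).const_mul 2).const_mul _)).add ((dx x t).mul (ds x))).congr_deriv ?_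
    field_simp; ring
  · intro x t
    exact (((dt x t).mul_const _).const_mul _)
  · intro x t
    exact (((dxt x t).mul_const _).const_mul _).add (((dt x t).mul_const _).const_mul _)
  · intro x t hS
    simp [z0 _ hS, (z1 _ hS).1, (z1 _ hS).2, (z2' _ hS).1, (z2' _ hS).2]
  · intro x t
    have q1 : (0:ℝ) ≤ 1 / n := by positivity
    have q2 : (1 / (n:ℝ)) ^ 2 ≤ 1 / n := by
      rw [sq]
      exact mul_le_of_le_one_right q1 (by rw [div_le_one (by positivity)]; exact hn1)
    have e2 : ∀ a s B : ℝ, |a| ≤ B → |s| ≤ 1 → |-(1 / (n:ℝ)) ^ 2 * (a * s)| ≤ B * (1 / n) := by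
      intro a s B ha hs
      rw [abs_mul, abs_neg, abs_mul, abs_of_nonneg (sq_nonneg (1 / (n:ℝ)))]
      have : |a| * |s| ≤ B * 1 := mul_le_mul ha hs (abs_nonneg _) ((abs_nonneg _).trans ha)
      calc _ ≤ 1 / (n:ℝ) * (B * 1) := mul_le_mul q2 this (by positivity) q1
        _ = _ := by ring
    have e1 : ∀ a s B : ℝ, |a| ≤ B → |s| ≤ 1 → |-(1 / (n:ℝ)) * (a * s)| ≤ B * (1 / n) := by
      intro a s B ha hs
      rw [abs_mul, abs_neg, abs_mul, abs_of_nonneg q1]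
      have : |a| * |s| ≤ B * 1 := mul_le_mul ha hs (abs_nonneg _) ((abs_nonneg _).trans ha)
      calc _ ≤ 1 / (n:ℝ) * (B * 1) := mul_le_mul_of_nonneg_left this q1
        _ = _ := by ring
    have hs := Real.abs_sin_le_one (n * x)
    have hcs := Real.abs_cos_le_one (n * x)
    have fin : ∀ B : ℝ, B ≤ B0 + 2 * B1 + B2 + B3 + B4 →
        B * (1 / n) ≤ (B0 + 2 * B1 + B2 + B3 + B4) / n := by
      intro B hB
      exact (mul_le_mul_of_nonneg_right hB q1).trans (by rw [mul_one_div])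
    refine ⟨?_, ?_, ?_, ?_, ?_⟩
    · exact (e2 _ _ _ (b0 _) hs).trans (fin _ (by linarith))
    · refine (abs_add_le _ _).trans ((add_le_add (e2 _ _ _ (b1 _) hs) (e1 _ _ _ (b0 _) hcs)).trans ?_)
      rw [← add_mul]; exact fin _ (by linarith)
    · exact (e2 _ _ _ (b2 _) hs).trans (fin _ (by linarith))
    · refine (abs_add_le _ _).trans ((add_le_add (e2 _ _ _ (b4 _) hs) (e1 _ _ _ (b2 _) hcs)).trans ?_)
      rw [← add_mul]; exact fin _ (by linarith)
    · rw [add_sub_cancel_right, ← mul_assoc 2]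
      refine (abs_add_le _ _).trans ((add_le_add (e2 _ _ _ (b3 _) hs)
        (e1 (2 * ψx (x, t)) _ (2 * B1) ?_ hcs)).trans ?_)
      · rw [abs_mul, abs_two]; linarith [b1 (x, t)]
      · rw [← add_mul]; exact fin _ (by linarith)

/-- Continuity of an inverse branch. -/
lemma branch_cont (sigma g : ℝ → ℝ) (a b p q : ℝ) (hs : StrictMonoOn sigma (Icc a b))
    (hc : ContinuousOn sigma (Icc a b))
    (hg : ∀ r ∈ Icc p q, g r ∈ Icc a b ∧ sigma (g r) = r) :
    StrictMonoOn g (Icc p q) ∧ ContinuousOn g (Icc p q) := by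
  refine ⟨?_, ?_⟩
  · intro r hr r' hr' hlt
    by_contra hcon
    have := hs.monotoneOn (hg r' hr').1 (hg r hr).1 (not_lt.1 hcon)
    rw [(hg r' hr').2, (hg r hr).2] at this
    linarith
  · intro r hr
    have key := isCompact_Icc (a := a) (b := b)
    refine key.tendsto_nhds_of_unique_mapClusterPt ?_ ?_
    · exact eventually_mem_nhdsWithin.mono fun r' hr' => (hg r' hr').1
    · intro y hy hcl
      apply hs.injOn hy (hg r hr).1
      rw [(hg r hr).2]
      have h1 : MapClusterPt (sigma y) (𝓝[Icc p q] r) (sigma ∘ g) := by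
        have hcy : Tendsto sigma (𝓝 y ⊓ Filter.map g (𝓝[Icc p q] r)) (𝓝 (sigma y)) := by
          refine (hc y hy).mono_left ?_
          refine inf_le_inf_left _ ?_
          rw [le_principal_iff]
          exact eventually_mem_nhdsWithin.mono fun r' hr' => (hg r' hr').1
        exact hcl.tendsto_comp' hcy
      have h2 : Tendsto (sigma ∘ g) (𝓝[Icc p q] r) (𝓝 r) := by
        refine (tendsto_id.mono_left nhdsWithin_le_nhds).congr' ?_
        exact eventually_mem_nhdsWithin.mono fun r' hr' => ((hg r' hr').2).symm
      have : ClusterPt (sigma y) (𝓝 r) := ClusterPt.mono h1 h2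
      exact eq_of_nhds_neBot this

lemma vol_omegaT (T : ℝ) (hT : 0 < T) :
    volume (OmegaT T) ≠ 0 ∧ volume (OmegaT T) ≠ ⊤ := by
  have : volume (OmegaT T) = ENNReal.ofReal T := by
    rw [OmegaT, Measure.volume_eq_prod, Measure.prod_prod, Real.volume_Ioo, Real.volume_Ioo]
    simp
  rw [this]
  simp [hT]

lemma omegaT_open (T : ℝ) : IsOpen (OmegaT T) := isOpen_Ioo.prod isOpen_Ioo

lemma omegaT_sub (T : ℝ) : OmegaT T ⊆ ClOmegaT T :=
  prod_mono Ioo_subset_Icc_self Ioo_subset_Icc_self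

lemma clOmegaT_compact (T : ℝ) : IsCompact (ClOmegaT T) := isCompact_Icc.prod isCompact_Icc

lemma essSup_le' (T : ℝ) (hT : 0 < T) (g : ℝ → ℝ → ℝ) (B : ℝ)
    (h : ∀ᵐ p ∂(volume.restrict (OmegaT T)), |g p.1 p.2| ≤ B) : EssSupAbs T g ≤ B := by
  have : NeBot (ae (volume.restrict (OmegaT T))) := by
    rw [ae_neBot, Ne, Measure.restrict_eq_zero]
    exact (vol_omegaT T hT).1
  refine Filter.limsup_le_of_le ?_ h
  exact IsCoboundedUnder.of_frequently_ge (a := 0) (Frequently.of_forall fun p => abs_nonneg _)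

lemma le_essSup' (T : ℝ) (g : ℝ → ℝ → ℝ)
    (hg : ContinuousOn (fun p : ℝ × ℝ => g p.1 p.2) (ClOmegaT T)) :
    ∀ᵐ p ∂(volume.restrict (OmegaT T)), |g p.1 p.2| ≤ EssSupAbs T g := by
  refine ae_le_essSup ?_
  obtain ⟨B, hB⟩ := (clOmegaT_compact T).exists_bound_of_continuousOn hg
  refine ⟨B, ?_⟩
  rw [eventually_map, ae_restrict_iff' (omegaT_open T).measurableSet]
  exact Eventually.of_forall fun p hp => hB p (omegaT_sub T hp)

lemma essSup_pert (T : ℝ) (hT : 0 < T) (g g' : ℝ → ℝ → ℝ) (e κ : ℝ)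
    (hg : ContinuousOn (fun p : ℝ × ℝ => g p.1 p.2) (ClOmegaT T))
    (h : ∀ x t, |g' x t - g x t| ≤ κ) (hκ : EssSupAbs T g + κ < e) : EssSupAbs T g' < e := by
  refine lt_of_le_of_lt (essSup_le' T hT g' _ ?_) hκ
  filter_upwards [le_essSup' T g hg] with p hp
  have := h p.1 p.2
  have h2 := abs_add_le (g p.1 p.2) (g' p.1 p.2 - g p.1 p.2)
  rw [add_sub_cancel] at h2
  linarith

/-- Add a perturbation to a pair. -/
def addPert (W : PairData) (φ φx φxx φxxx φt φxt : ℝ → ℝ → ℝ) : PairData where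
  u := fun x t => W.u x t + φx x t
  ux := fun x t => W.ux x t + φxx x t
  uxx := fun x t => W.uxx x t + φxxx x t
  ut := fun x t => W.ut x t + φxt x t
  v := fun x t => W.v x t + φ x t
  vx := fun x t => W.vx x t + φx x t
  vxx := fun x t => W.vxx x t + φxx x t
  vxxx := fun x t => W.vxxx x t + φxxx x t
  vt := fun x t => W.vt x t + φt x t

lemma addPert_C21 {T : ℝ} {W : PairData} {S φ φx φxx φxxx φt φxt}
    (hP : Pert S φ φx φxx φxxx φt φxt) (h : C21 T W.u W.ux W.uxx W.ut) :
    C21 T (addPert W φ φx φxx φxxx φt φxt).u (addPert W φ φx φxx φxxx φt φxt).ux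
      (addPert W φ φx φxx φxxx φt φxt).uxx (addPert W φ φx φxx φxxx φt φxt).ut where
  dx p hp := (h.dx p hp).add (hP.dxx p.1 p.2).hasDerivWithinAt
  dxx p hp := (h.dxx p hp).add (hP.dxxx p.1 p.2).hasDerivWithinAt
  dt p hp := (h.dt p hp).add (hP.dxt p.1 p.2).hasDerivWithinAt
  cont := h.cont.add hP.cx.continuousOn
  cont_x := h.cont_x.add hP.cxx.continuousOn
  cont_xx := h.cont_xx.add hP.cxxx.continuousOn
  cont_t := h.cont_t.add hP.cxt.continuousOn

lemma addPert_C31 {T : ℝ} {W : PairData} {S φ φx φxx φxxx φt φxt}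
    (hP : Pert S φ φx φxx φxxx φt φxt) (h : C31 T W.v W.vx W.vxx W.vxxx W.vt) :
    C31 T (addPert W φ φx φxx φxxx φt φxt).v (addPert W φ φx φxx φxxx φt φxt).vx
      (addPert W φ φx φxx φxxx φt φxt).vxx (addPert W φ φx φxx φxxx φt φxt).vxxx
      (addPert W φ φx φxx φxxx φt φxt).vt where
  dx p hp := (h.dx p hp).add (hP.dx p.1 p.2).hasDerivWithinAt
  dxx p hp := (h.dxx p hp).add (hP.dxx p.1 p.2).hasDerivWithinAt
  dxxx p hp := (h.dxxx p hp).add (hP.dxxx p.1 p.2).hasDerivWithinAt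
  dt p hp := (h.dt p hp).add (hP.dt p.1 p.2).hasDerivWithinAt
  cont := h.cont.add hP.c0.continuousOn
  cont_x := h.cont_x.add hP.cx.continuousOn
  cont_xx := h.cont_xx.add hP.cxx.continuousOn
  cont_xxx := h.cont_xxx.add hP.cxxx.continuousOn
  cont_t := h.cont_t.add hP.ct.continuousOn

lemma pot_pert {α T : ℝ} {b bx c f : ℝ → ℝ → ℝ} {d : ℝ → ℝ} (hcoeff : CoeffHyp α T b bx c f d)
    {W : PairData} {S φ φx φxx φxxx φt φxt} (hP : Pert S φ φx φxx φxxx φt φxt)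
    (hS : S ⊆ OmegaT T)
    (hu : ContinuousOn (fun p : ℝ × ℝ => W.u p.1 p.2) (ClOmegaT T)) (x t : ℝ)
    (hp : (x, t) ∈ OmegaT T) :
    Pot c bx (addPert W φ φx φxx φxxx φt φxt).u x t = Pot c bx W.u x t + d t * φ x t := by
  obtain ⟨⟨h0, h1⟩, h2, h3⟩ := hp
  simp only at h0 h1 h2 h3
  have hmaps : MapsTo (fun y : ℝ => ((y, t) : ℝ × ℝ)) (Icc 0 x) (ClOmegaT T) := fun y hy =>
    ⟨⟨hy.1, hy.2.trans h1.le⟩, h2.le, h3.le⟩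
  have hc : ContinuousOn (fun y : ℝ => ((y, t) : ℝ × ℝ)) (Icc 0 x) := by fun_prop
  have i1 : IntervalIntegrable (fun y => (c y t - bx y t) * W.u y t) volume 0 x := by
    apply ContinuousOn.intervalIntegrable_of_Icc h0.le
    exact ((hcoeff.c_cont.comp hc hmaps).sub (hcoeff.bx_cont.comp hc hmaps)).mul
      (hu.comp hc hmaps)
  have hφx : Continuous (fun y => φx y t) := hP.cx.comp (by fun_prop : Continuous fun y : ℝ => (y, t))
  have i2 : IntervalIntegrable (fun y => d t * φx y t) volume 0 x :=
    (continuous_const.mul hφx).intervalIntegrable _ _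
  have e : Pot c bx (addPert W φ φx φxx φxxx φt φxt).u x t
      = ∫ y in (0:ℝ)..x, ((c y t - bx y t) * W.u y t + d t * φx y t) := by
    apply intervalIntegral.integral_congr
    intro y hy
    rw [uIcc_of_le h0.le] at hy
    have := hcoeff.c_eq _ (hmaps hy)
    simp only at this
    simp only [addPert]
    rw [this]
    ring
  rw [e, intervalIntegral.integral_add i1 i2, intervalIntegral.integral_const_mul,
    intervalIntegral.integral_eq_sub_of_hasDerivAt (fun y _ => hP.dx y t)
      (hφx.intervalIntegrable _ _), (hP.z 0 t (fun h => lt_irrefl _ (hS h).1.1)).1, sub_zero]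
  rfl

lemma gval_pert {α T : ℝ} {b bx c f : ℝ → ℝ → ℝ} {d : ℝ → ℝ} (hcoeff : CoeffHyp α T b bx c f d)
    {W : PairData} {S φ φx φxx φxxx φt φxt} (hP : Pert S φ φx φxx φxxx φt φxt)
    (hS : S ⊆ OmegaT T)
    (hu : ContinuousOn (fun p : ℝ × ℝ => W.u p.1 p.2) (ClOmegaT T)) (x t : ℝ)
    (hp : (x, t) ∈ OmegaT T) :
    GVal b c bx f (addPert W φ φx φxx φxxx φt φxt).u (addPert W φ φx φxx φxxx φt φxt).vt x t
      = GVal b c bx f W.u W.vt x t + (φt x t - b x t * φx x t - d t * φ x t) := by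
  unfold GVal
  rw [pot_pert hcoeff hP hS hu x t hp]
  simp only [addPert]
  ring

lemma gval_cont {α T : ℝ} (hT : 0 < T) {b bx c f : ℝ → ℝ → ℝ} {d : ℝ → ℝ}
    (hcoeff : CoeffHyp α T b bx c f d) {u vt : ℝ → ℝ → ℝ}
    (hu : ContinuousOn (fun p : ℝ × ℝ => u p.1 p.2) (ClOmegaT T))
    (hvt : ContinuousOn (fun p : ℝ × ℝ => vt p.1 p.2) (ClOmegaT T)) :
    ContinuousOn (fun p : ℝ × ℝ => GVal b c bx f u vt p.1 p.2) (ClOmegaT T) := by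
  refine ((hvt.sub (hcoeff.b_cont.mul hu)).sub ?_).sub ?_
  · exact cont_param T hT (fun y t => (c y t - bx y t) * u y t)
      ((hcoeff.c_cont.sub hcoeff.bx_cont).mul hu)
  · exact cont_param T hT f hcoeff.f_cont

lemma pos_min (S : Set (ℝ × ℝ)) (hS : IsCompact S) (g : ℝ × ℝ → ℝ) (hg : ContinuousOn g S)
    (hpos : ∀ p ∈ S, 0 < g p) : ∃ ρ > 0, ∀ p ∈ S, ρ ≤ g p := by
  rcases S.eq_empty_or_nonempty with rfl | hne
  · exact ⟨1, one_pos, by simp⟩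
  · obtain ⟨p, hp, hmin⟩ := hS.exists_isMinOn hne hg
    exact ⟨g p, hpos p hp, fun q hq => hmin hq⟩

/-- distance of `u_x` to the two phases. -/
def mfun (sm sp : ℝ → ℝ) (b bx c f : ℝ → ℝ → ℝ) (W : PairData) (p : ℝ × ℝ) : ℝ :=
  min (W.ux p.1 p.2 - sm (GVal b c bx f W.u W.vt p.1 p.2))
    (sp (GVal b c bx f W.u W.vt p.1 p.2) - W.ux p.1 p.2)

section
variable {α T r1 r2 mstar ε GammaStar : ℝ} {sigma sm sp : ℝ → ℝ}
    {b bx c f : ℝ → ℝ → ℝ} {d : ℝ → ℝ} {us ust vs : ℝ → ℝ → ℝ} {E : Set (ℝ × ℝ)}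

lemma mfun_props (hT : 0 < T) (hcoeff : CoeffHyp α T b bx c f d) (hE : E ⊆ OmegaT T)
    (hsm : ContinuousOn sm (Icc r1 r2)) (hsp : ContinuousOn sp (Icc r1 r2))
    (W : PairData) (h1 : C21 T W.u W.ux W.uxx W.ut) (h2 : C31 T W.v W.vx W.vxx W.vxxx W.vt)
    (hU : ∀ p ∈ E, GradInU r1 r2 mstar sm sp b c bx f W.u W.ux W.ut W.vx W.vt p) :
    ContinuousOn (mfun sm sp b bx c f W) E ∧ (∀ p ∈ E, 0 < mfun sm sp b bx c f W p) ∧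
    (∃ M, ∀ p ∈ E, mfun sm sp b bx c f W p ≤ M) ∧
    ContinuousOn (Zfun sm sp b bx c f W.u W.vt W.ux) E ∧
    (∀ p ∈ E, |Zfun sm sp b bx c f W.u W.vt W.ux p| ≤ 1) ∧
    ContinuousOn (fun p : ℝ × ℝ => sm (GVal b c bx f W.u W.vt p.1 p.2)) E ∧
    ContinuousOn (fun p : ℝ × ℝ => sp (GVal b c bx f W.u W.vt p.1 p.2)) E := by
  have hEC := hE.trans (omegaT_sub T)
  have hG := (gval_cont hT hcoeff h1.cont h2.cont_t).mono hEC
  have hmem : MapsTo (fun p : ℝ × ℝ => GVal b c bx f W.u W.vt p.1 p.2) E (Icc r1 r2) := fun p hp =>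
    ⟨(hU p hp).2.2.1.le, (hU p hp).2.2.2.1.le⟩
  have c1 : ContinuousOn (fun p : ℝ × ℝ => sm (GVal b c bx f W.u W.vt p.1 p.2)) E := hsm.comp hG hmem
  have c2 : ContinuousOn (fun p : ℝ × ℝ => sp (GVal b c bx f W.u W.vt p.1 p.2)) E := hsp.comp hG hmem
  have c3 := h1.cont_x.mono hEC
  have hlt : ∀ p ∈ E, sm (GVal b c bx f W.u W.vt p.1 p.2) < W.ux p.1 p.2 ∧
    W.ux p.1 p.2 < sp (GVal b c bx f W.u W.vt p.1 p.2) := fun p hp => (hU p hp).2.2.2.2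
  refine ⟨ContinuousOn.inf (c3.sub c1) (c2.sub c3), fun p hp => lt_min ?_ ?_, ?_, ?_, ?_, c1, c2⟩
  · linarith [(hlt p hp).1]
  · linarith [(hlt p hp).2]
  · obtain ⟨B1, hB1⟩ := isCompact_Icc.exists_bound_of_continuousOn hsm
    obtain ⟨B2, hB2⟩ := (clOmegaT_compact T).exists_bound_of_continuousOn h1.cont_x
    refine ⟨B2 + B1, fun p hp => (min_le_left _ _).trans ?_⟩
    have a1 := hB1 _ (hmem hp)
    have a2 := hB2 _ (hEC hp)
    rw [Real.norm_eq_abs, abs_le] at a1 a2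
    linarith
  · refine (c3.sub c1).div (c2.sub c1) fun p hp => ?_
    have := hlt p hp
    linarith
  · intro p hp
    have := hlt p hp
    unfold Zfun
    rw [abs_of_nonneg (div_nonneg (by linarith) (by linarith)), div_le_one (by linarith)]
    linarith

lemma bdd_integrable {E : Set (ℝ × ℝ)} (hE : MeasurableSet E) (hfin : volume E ≠ ⊤)
    {g : ℝ × ℝ → ℝ} (hg : ContinuousOn g E) (M : ℝ) (hM : ∀ p ∈ E, |g p| ≤ M) :
    IntegrableOn g E :=
  IntegrableOn.of_bound hfin.lt_top (hg.aestronglyMeasurable hE) M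
    ((ae_restrict_iff' hE).2 (Eventually.of_forall hM))
end

section
variable {α T r1 r2 mstar ε GammaStar : ℝ} {sigma sm sp : ℝ → ℝ}
    {b bx c f : ℝ → ℝ → ℝ} {d : ℝ → ℝ} {us ust vs : ℝ → ℝ → ℝ} {E : Set (ℝ × ℝ)}

lemma osc_tendsto {y : ℕ → ℝ} (k x : ℝ) (hy : Tendsto y atTop (𝓝 0)) :
    Tendsto (fun n : ℕ => k * Real.sin (n * x) * y n) atTop (𝓝 0) := by
  have h1 : Tendsto (fun n => |k| * |y n|) atTop (𝓝 0) := by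
    simpa using (hy.abs.const_mul |k|)
  refine squeeze_zero_norm (fun n => ?_) h1
  rw [Real.norm_eq_abs, abs_mul, abs_mul]
  have := Real.abs_sin_le_one (n * x)
  have : |k| * |Real.sin (n * x)| ≤ |k| * 1 := mul_le_mul_of_nonneg_left this (abs_nonneg _)
  exact mul_le_mul_of_nonneg_right (by linarith) (abs_nonneg _)

lemma step (hT : 0 < T) (hcoeff : CoeffHyp α T b bx c f d) (hEo : IsOpen E) (hE : E ⊆ OmegaT T)
    (hsm : ContinuousOn sm (Icc r1 r2)) (hsp : ContinuousOn sp (Icc r1 r2))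
    (hus : ContinuousOn (fun p : ℝ × ℝ => us p.1 p.2) (ClOmegaT T))
    (hust : ContinuousOn (fun p : ℝ × ℝ => ust p.1 p.2) (ClOmegaT T))
    (W : PairData)
    (hW : InAdmissible T r1 r2 mstar ε GammaStar sigma sm sp b bx c f us ust vs E W)
    (δ : ℝ) (hδ : 0 < δ) (hEpos : 0 < (volume E).toReal)
    (hbig : δ * (volume E).toReal < ∫ p in E, mfun sm sp b bx c f W p)
    (η : ℝ) (hη : 0 < η) :
    ∃ W' : PairData,
      InAdmissible T r1 r2 mstar ε GammaStar sigma sm sp b bx c f us ust vs E W' ∧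
      (∫ p in E, W.ux p.1 p.2 ^ 2) + δ ^ 2 * (volume E).toReal / 8
        ≤ ∫ p in E, W'.ux p.1 p.2 ^ 2 ∧
      ∀ x t, |W'.u x t - W.u x t| ≤ η ∧ |W'.v x t - W.v x t| ≤ η := by
  obtain ⟨h1, h2, ⟨O, hO1, hO2, hO3, hO4, hO5, hO6⟩, h4, h5, hU, h7⟩ := hW
  have hEC := hE.trans (omegaT_sub T)
  have hEm := hEo.measurableSet
  have hfin : volume E ≠ ⊤ := ne_top_of_le_ne_top (vol_omegaT T hT).2 (measure_mono hE)
  obtain ⟨mc, mpos, ⟨M, hM⟩, Zc, Zb, smc, spc⟩ := mfun_props hT hcoeff hE hsm hsp W h1 h2 hU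
  have mint : IntegrableOn (mfun sm sp b bx c f W) E :=
    bdd_integrable hEm hfin mc M fun p hp => by rw [abs_of_pos (mpos p hp)]; exact hM p hp
  obtain ⟨ψ, ψs, ψc, ψE, ψ0, ψm, ψI⟩ := exists_psi E hEo hfin _ M mc mpos hM mint
    (lt_trans (by positivity) hbig)
  obtain ⟨φ, φx, φxx, φxxx, φt, φxt, C, hC, hφ⟩ := exists_pert ψ ψs ψc
  have hSO : tsupport ψ ⊆ OmegaT T := ψE.trans hE
  let V : ℕ → PairData := fun n => addPert W (φ n) (φx n) (φxx n) (φxxx n) (φt n) (φxt n)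
  have hV1 : ∀ n, 1 ≤ n → C21 T (V n).u (V n).ux (V n).uxx (V n).ut := fun n hn =>
    addPert_C21 (hφ n hn).1 h1
  have hV2 : ∀ n, 1 ≤ n → C31 T (V n).v (V n).vx (V n).vxx (V n).vxxx (V n).vt := fun n hn =>
    addPert_C31 (hφ n hn).1 h2
  let G : ℝ × ℝ → ℝ := fun p => GVal b c bx f W.u W.vt p.1 p.2
  let Gn : ℕ → ℝ × ℝ → ℝ := fun n p => GVal b c bx f (V n).u (V n).vt p.1 p.2
  have hGc : ContinuousOn G E := (gval_cont hT hcoeff h1.cont h2.cont_t).mono hEC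
  have hGn : ∀ n, 1 ≤ n → ∀ p ∈ E, Gn n p = G p +
      (φt n p.1 p.2 - b p.1 p.2 * φx n p.1 p.2 - d p.2 * φ n p.1 p.2) := fun n hn p hp =>
    gval_pert hcoeff (hφ n hn).1 hSO h1.cont p.1 p.2 (hE hp)
  obtain ⟨Bb, hBb⟩ := (clOmegaT_compact T).exists_bound_of_continuousOn hcoeff.b_cont
  obtain ⟨Bd, hBd⟩ := isCompact_Icc.exists_bound_of_continuousOn hcoeff.d_cont
  let C' := (1 + |Bb| + |Bd|) * C
  have hCC' : C ≤ C' := by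
    have : 0 ≤ (|Bb| + |Bd|) * C := by positivity
    simp only [C']; linarith
  have hlim : Tendsto (fun n : ℕ => C' / n) atTop (𝓝 0) := tendsto_const_div_atTop_nhds_zero_nat C'
  have hsmall : ∀ κ > 0, ∀ᶠ n : ℕ in atTop, C' / n < κ := fun κ hκ =>
    hlim.eventually_lt_const hκ
  have hCn : ∀ n : ℕ, C / n ≤ C' / n := fun n => div_le_div_of_nonneg_right hCC' (by positivity)
  have hGdiff : ∀ n, 1 ≤ n → ∀ p ∈ E, |Gn n p - G p| ≤ C' / n := by
    intro n hn p hp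
    rw [hGn n hn p hp, add_sub_cancel_left]
    obtain ⟨a1, a2, a3, a4, a5⟩ := (hφ n hn).2 p.1 p.2
    have b1 : |b p.1 p.2| ≤ |Bb| := (hBb p (hEC hp)).trans (le_abs_self _)
    have b2 : |d p.2| ≤ |Bd| := (hBd p.2 (hEC hp).2).trans (le_abs_self _)
    have c1 : |b p.1 p.2 * φx n p.1 p.2| ≤ |Bb| * (C / n) := by
      rw [abs_mul]; exact mul_le_mul b1 a2 (abs_nonneg _) (abs_nonneg _)
    have c2 : |d p.2 * φ n p.1 p.2| ≤ |Bd| * (C / n) := by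
      rw [abs_mul]; exact mul_le_mul b2 a1 (abs_nonneg _) (abs_nonneg _)
    have c3 : C' / n = C / n + |Bb| * (C / n) + |Bd| * (C / n) := by simp only [C']; ring
    rw [c3]
    refine (abs_sub _ _).trans (add_le_add ((abs_sub _ _).trans (add_le_add a3 c1)) c2)
  have hGlim : ∀ p ∈ E, Tendsto (fun n => Gn n p) atTop (𝓝 (G p)) := by
    intro p hp
    rw [tendsto_iff_norm_sub_tendsto_zero]
    refine squeeze_zero' (Eventually.of_forall fun n => norm_nonneg _) ?_ hlim
    filter_upwards [eventually_ge_atTop 1] with n hn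
    exact hGdiff n hn p hp
  -- margins on the support
  have hgrad : ∀ᶠ n : ℕ in atTop, ∀ p ∈ E,
      GradInU r1 r2 mstar sm sp b c bx f (V n).u (V n).ux (V n).ut (V n).vx (V n).vt p := by
    obtain ⟨ρ, hρ, hρm⟩ := pos_min (tsupport ψ) ψc
      (fun p => min (min (mstar - |W.ut p.1 p.2|) (mfun sm sp b bx c f W p - ψ p))
        (min (G p - r1) (r2 - G p)))
      (ContinuousOn.inf (ContinuousOn.inf
        (continuousOn_const.sub ((h1.cont_t.mono (ψE.trans hEC)).abs))
        ((mc.mono ψE).sub ψs.continuous.continuousOn))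
        (ContinuousOn.inf ((hGc.mono ψE).sub continuousOn_const)
          (continuousOn_const.sub (hGc.mono ψE)))) (by
      intro p hp
      have hu := hU p (ψE hp)
      refine lt_min (lt_min ?_ ?_) (lt_min ?_ ?_)
      · linarith [hu.2.1]
      · linarith [ψm p (ψE hp)]
      · exact sub_pos.2 hu.2.2.1
      · exact sub_pos.2 hu.2.2.2.1)
    have uc1 := Metric.uniformContinuousOn_iff.1
      (isCompact_Icc.uniformContinuousOn_of_continuous hsm) (ρ / 2) (by positivity)
    have uc2 := Metric.uniformContinuousOn_iff.1
      (isCompact_Icc.uniformContinuousOn_of_continuous hsp) (ρ / 2) (by positivity)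
    obtain ⟨κ1, hκ1, uc1⟩ := uc1
    obtain ⟨κ2, hκ2, uc2⟩ := uc2
    filter_upwards [eventually_ge_atTop 1, hsmall κ1 hκ1, hsmall κ2 hκ2,
      hsmall (ρ / 2) (by positivity)] with n hn n1 n2 n3 p hp
    obtain ⟨g1, g2, g3⟩ := hU p hp
    by_cases hpS : p ∈ tsupport ψ
    · have hr := hρm p hpS
      rw [le_min_iff, le_min_iff, le_min_iff] at hr
      obtain ⟨⟨k1, k2⟩, k3, k4⟩ := hr
      obtain ⟨a1, a2, a3, a4, a5⟩ := (hφ n hn).2 p.1 p.2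
      have hgd := hGdiff n hn p hp
      have hgd' := abs_le.1 hgd
      have hGmem : G p ∈ Icc r1 r2 := ⟨by linarith, by linarith⟩
      have hGnmem : Gn n p ∈ Icc r1 r2 := ⟨by linarith, by linarith⟩
      have d1 := uc1 (Gn n p) hGnmem (G p) hGmem (by rw [Real.dist_eq]; linarith)
      have d2 := uc2 (Gn n p) hGnmem (G p) hGmem (by rw [Real.dist_eq]; linarith)
      rw [Real.dist_eq, abs_lt] at d1 d2
      have m1 : mfun sm sp b bx c f W p ≤ W.ux p.1 p.2 - sm (G p) := min_le_left _ _
      have m2 : mfun sm sp b bx c f W p ≤ sp (G p) - W.ux p.1 p.2 := min_le_right _ _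
      have hx : |ψ p * Real.sin (n * p.1)| ≤ ψ p := by
        rw [abs_mul, abs_of_nonneg (ψ0 p)]
        exact mul_le_of_le_one_right (ψ0 p) (Real.abs_sin_le_one _)
      have hx' := abs_le.1 hx
      have a5' := abs_le.1 a5
      have hcn := hCn n
      have hpe : ψ (p.1, p.2) = ψ p := rfl
      rw [hpe] at a5'
      refine ⟨?_, ?_, ?_, ?_, ?_, ?_⟩
      · simp only [V, addPert]; rw [g1]
      · have := abs_add_le (W.ut p.1 p.2) (φxt n p.1 p.2)
        simp only [V, addPert]
        linarith
      · change r1 < Gn n p; linarith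
      · change Gn n p < r2; linarith
      · change sm (Gn n p) < W.ux p.1 p.2 + φxx n p.1 p.2; linarith
      · change W.ux p.1 p.2 + φxx n p.1 p.2 < sp (Gn n p); linarith
    · obtain ⟨z1, z2, z3, z4, z5⟩ := (hφ n hn).1.z p.1 p.2 hpS
      have hg := hGn n hn p hp
      rw [z1, z2, z4] at hg
      simp only [mul_zero, sub_zero, add_zero] at hg
      refine ⟨?_, ?_, ?_⟩
      · simp only [V, addPert]; rw [g1]
      · simp only [V, addPert, z5, add_zero]; exact g2
      · change (W.ux p.1 p.2 + φxx n p.1 p.2, Gn n p) ∈ _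
        rw [z3, add_zero, hg]; exact g3
  have hpt : ∀ p : ℝ × ℝ, Tendsto (fun n => φxx n p.1 p.2 - ψ p * Real.sin (n * p.1)) atTop (𝓝 0) := by
    intro p
    rw [tendsto_zero_iff_norm_tendsto_zero]
    refine squeeze_zero' (Eventually.of_forall fun n => norm_nonneg _) ?_ hlim
    filter_upwards [eventually_ge_atTop 1] with n hn
    exact ((hφ n hn).2 p.1 p.2).2.2.2.2.trans (hCn n)
  -- convergence of the gauge integral
  have hgauge : Tendsto (fun n => ∫ p in E, Zfun sm sp b bx c f (V n).u (V n).vt (V n).ux p) atTop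
      (𝓝 (∫ p in E, Zfun sm sp b bx c f W.u W.vt W.ux p)) := by
    let g : ℝ × ℝ → ℝ := fun p => ψ p / (sp (G p) - sm (G p))
    have hgap : ∀ p ∈ E, mfun sm sp b bx c f W p < sp (G p) - sm (G p) := by
      intro p hp
      have q1 : sm (G p) < W.ux p.1 p.2 := (hU p hp).2.2.2.2.1
      have m2 : mfun sm sp b bx c f W p ≤ sp (G p) - W.ux p.1 p.2 := min_le_right _ _
      linarith
    have hgc : ContinuousOn g E := ψs.continuous.continuousOn.div (spc.sub smc) fun p hp => by
      exact ((mpos p hp).trans (hgap p hp)).ne'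
    have hgb : ∀ p ∈ E, |g p| ≤ 1 := fun p hp => by
      have q := hgap p hp
      have q' := mpos p hp
      have q'' := ψm p hp
      simp only [g]
      rw [abs_of_nonneg (div_nonneg (ψ0 p) (by linarith)), div_le_one (by linarith)]
      linarith
    have hgi : IntegrableOn g E := bdd_integrable hEm hfin hgc 1 hgb
    have hrl := rl_sin E hEm g hgi 1 one_pos
    simp only [one_mul] at hrl
    have hsc : ∀ n : ℕ, ContinuousOn (fun p : ℝ × ℝ => g p * Real.sin (n * p.1)) E := fun n =>
      hgc.mul (by fun_prop)
    have hsb : ∀ n : ℕ, ∀ p ∈ E, |g p * Real.sin (n * p.1)| ≤ 1 := fun n p hp => by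
      rw [abs_mul]
      exact mul_le_one₀ (hgb p hp) (abs_nonneg _) (Real.abs_sin_le_one _)
    have hD : Tendsto (fun n : ℕ => ∫ p in E, (Zfun sm sp b bx c f (V n).u (V n).vt (V n).ux p
        - g p * Real.sin (n * p.1))) atTop
        (𝓝 (∫ p in E, Zfun sm sp b bx c f W.u W.vt W.ux p)) := by
      refine tendsto_integral_filter_of_dominated_convergence (fun _ => (2:ℝ)) ?_ ?_ ?_ ?_
      · filter_upwards [hgrad, eventually_ge_atTop 1] with n hn hn1
        obtain ⟨-, -, -, zc, -⟩ := mfun_props hT hcoeff hE hsm hsp (V n) (hV1 n hn1) (hV2 n hn1) hn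
        exact (zc.sub (hsc n)).aestronglyMeasurable hEm
      · filter_upwards [hgrad, eventually_ge_atTop 1] with n hn hn1
        obtain ⟨-, -, -, -, zb, -⟩ := mfun_props hT hcoeff hE hsm hsp (V n) (hV1 n hn1) (hV2 n hn1) hn
        rw [ae_restrict_iff' hEm]
        refine Eventually.of_forall fun p hp => ?_
        rw [Real.norm_eq_abs]
        refine (abs_sub _ _).trans ?_
        linarith [zb p hp, hsb n p hp]
      · exact integrableOn_const hfin
      · rw [ae_restrict_iff' hEm]
        refine Eventually.of_forall fun p hp => ?_
        have hIcc : Icc r1 r2 ∈ 𝓝 (G p) := Icc_mem_nhds (hU p hp).2.2.1 (hU p hp).2.2.2.1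
        have t1 : Tendsto (fun n => sm (Gn n p)) atTop (𝓝 (sm (G p))) :=
          (hsm.continuousAt hIcc).tendsto.comp (hGlim p hp)
        have t2 : Tendsto (fun n => sp (Gn n p)) atTop (𝓝 (sp (G p))) :=
          (hsp.continuousAt hIcc).tendsto.comp (hGlim p hp)
        have hne : sp (G p) - sm (G p) ≠ 0 := ((mpos p hp).trans (hgap p hp)).ne'
        have t3 := (t2.sub t1).inv₀ hne
        have t4 : Tendsto (fun n => (sp (Gn n p) - sm (Gn n p))⁻¹ - (sp (G p) - sm (G p))⁻¹) atTop
            (𝓝 0) := by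
          simpa using t3.sub_const ((sp (G p) - sm (G p))⁻¹)
        have t5 := osc_tendsto (ψ p) p.1 t4
        have t6 := ((t1.const_sub (W.ux p.1 p.2)).mul t3).add (((hpt p).mul t3).add t5)
        simp only [zero_mul, add_zero] at t6
        refine (t6.congr fun n => ?_)
        change _ = ((W.ux p.1 p.2 + φxx n p.1 p.2) - sm (Gn n p)) / (sp (Gn n p) - sm (Gn n p))
          - ψ p / (sp (G p) - sm (G p)) * Real.sin (n * p.1)
        rw [div_eq_mul_inv, div_eq_mul_inv]
        ring
    have hsum := hD.add hrl
    rw [add_zero] at hsum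
    refine hsum.congr' ?_
    filter_upwards [hgrad, eventually_ge_atTop 1] with n hn hn1
    obtain ⟨-, -, -, zc, zb, -⟩ := mfun_props hT hcoeff hE hsm hsp (V n) (hV1 n hn1) (hV2 n hn1) hn
    have i1 := bdd_integrable hEm hfin zc 1 zb
    have i2 := bdd_integrable hEm hfin (hsc n) 1 (hsb n)
    rw [integral_sub i1 i2]
    ring
  -- convergence of the energy
  obtain ⟨B, hB⟩ := (clOmegaT_compact T).exists_bound_of_continuousOn h1.cont_x
  obtain ⟨P, hP⟩ := ψc.exists_bound_of_continuous ψs.continuous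
  have uxc := h1.cont_x.mono hEC
  have hP0 : 0 ≤ P := (norm_nonneg _).trans (hP 0)
  have hBE : ∀ p ∈ E, |W.ux p.1 p.2| ≤ |B| := fun p hp => (hB p (hEC hp)).trans (le_abs_self _)
  have hux2 : IntegrableOn (fun p : ℝ × ℝ => W.ux p.1 p.2 ^ 2) E :=
    bdd_integrable hEm hfin (uxc.pow 2) (|B| ^ 2) fun p hp => by
      rw [abs_pow]; exact pow_le_pow_left₀ (abs_nonneg _) (hBE p hp) 2
  have hψ2 : IntegrableOn (fun p : ℝ × ℝ => ψ p ^ 2) E :=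
    bdd_integrable hEm hfin (ψs.continuous.pow 2).continuousOn (P ^ 2) fun p hp => by
      rw [abs_pow]; exact pow_le_pow_left₀ (abs_nonneg _) (hP p) 2
  have hψi : IntegrableOn ψ E := bdd_integrable hEm hfin ψs.continuous.continuousOn P fun p _ => hP p
  have hJ : Tendsto (fun n => ∫ p in E, (V n).ux p.1 p.2 ^ 2) atTop
      (𝓝 (∫ p in E, (W.ux p.1 p.2 ^ 2 + 1 / 2 * ψ p ^ 2))) := by
    let g1 : ℝ × ℝ → ℝ := fun p => 2 * W.ux p.1 p.2 * ψ p
    let g2 : ℝ × ℝ → ℝ := fun p => 1 / 2 * ψ p ^ 2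
    have g1c : ContinuousOn g1 E := (continuousOn_const.mul uxc).mul ψs.continuous.continuousOn
    have g1b : ∀ p ∈ E, |g1 p| ≤ 2 * |B| * P := fun p hp => by
      simp only [g1]
      rw [abs_mul, abs_mul, abs_two]
      exact mul_le_mul (mul_le_mul_of_nonneg_left (hBE p hp) (by norm_num)) (hP p) (abs_nonneg _)
        (by positivity)
    have g1i := bdd_integrable hEm hfin g1c _ g1b
    have g2i : IntegrableOn g2 E := hψ2.const_mul (1 / 2)
    have rl1 := rl_sin E hEm g1 g1i 1 one_pos
    have rl2 := rl_cos E hEm g2 g2i 2 two_pos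
    simp only [one_mul] at rl1
    have i1 : ∀ n : ℕ, IntegrableOn (fun p : ℝ × ℝ => g1 p * Real.sin (n * p.1)) E := fun n =>
      bdd_integrable hEm hfin (g1c.mul (by fun_prop)) (2 * |B| * P) fun p hp => by
        rw [abs_mul]
        calc _ ≤ (2 * |B| * P) * 1 := mul_le_mul (g1b p hp) (Real.abs_sin_le_one _) (abs_nonneg _)
              (by positivity)
          _ = _ := mul_one _
    have i2 : ∀ n : ℕ, IntegrableOn (fun p : ℝ × ℝ => g2 p * Real.cos (2 * n * p.1)) E := fun n =>
      bdd_integrable hEm hfin ((by have := ψs.continuous; fun_prop : Continuous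
        (fun p : ℝ × ℝ => g2 p * Real.cos (2 * n * p.1))).continuousOn) (1 / 2 * P ^ 2) fun p hp => by
        rw [abs_mul]
        have : |g2 p| ≤ 1 / 2 * P ^ 2 := by
          simp only [g2]
          rw [abs_mul, abs_pow, abs_of_nonneg (by norm_num : (0:ℝ) ≤ 1 / 2)]
          exact mul_le_mul_of_nonneg_left (pow_le_pow_left₀ (abs_nonneg _) (hP p) 2) (by norm_num)
        calc _ ≤ (1 / 2 * P ^ 2) * 1 := mul_le_mul this (Real.abs_cos_le_one _) (abs_nonneg _)
              (by positivity)
          _ = _ := mul_one _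
    let e : ℕ → ℝ × ℝ → ℝ := fun n p => φxx n p.1 p.2 - ψ p * Real.sin (n * p.1)
    have heb : ∀ n, 1 ≤ n → ∀ p, |e n p| ≤ C := fun n hn p =>
      ((hφ n hn).2 p.1 p.2).2.2.2.2.trans (div_le_self hC (by exact_mod_cast hn))
    have hec : ∀ n, 1 ≤ n → Continuous (e n) := fun n hn =>
      (hφ n hn).1.cxx.sub (ψs.continuous.mul (by fun_prop))
    let R : ℕ → ℝ × ℝ → ℝ := fun n p => (W.ux p.1 p.2 ^ 2 + 1 / 2 * ψ p ^ 2)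
      + e n p * (2 * W.ux p.1 p.2 + 2 * (ψ p * Real.sin (n * p.1)) + e n p)
    have hRc : ∀ n, 1 ≤ n → ContinuousOn (R n) E := fun n hn => by
      have q := (hec n hn).continuousOn (s := E)
      have q2 := ψs.continuous.continuousOn (s := E)
      refine ((uxc.pow 2).add (continuousOn_const.mul (q2.pow 2))).add (q.mul
        (((continuousOn_const.mul uxc).add (continuousOn_const.mul (q2.mul ?_))).add q))
      fun_prop
    have hRb : ∀ n, 1 ≤ n → ∀ p ∈ E, |R n p| ≤ (|B| ^ 2 + 1 / 2 * P ^ 2) + C * (2 * |B| + 2 * P + C) := by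
      intro n hn p hp
      have q1 : |W.ux p.1 p.2 ^ 2| ≤ |B| ^ 2 := by
        rw [abs_pow]; exact pow_le_pow_left₀ (abs_nonneg _) (hBE p hp) 2
      have q2 : |1 / 2 * ψ p ^ 2| ≤ 1 / 2 * P ^ 2 := by
        rw [abs_mul, abs_pow, abs_of_nonneg (by norm_num : (0:ℝ) ≤ 1 / 2)]
        exact mul_le_mul_of_nonneg_left (pow_le_pow_left₀ (abs_nonneg _) (hP p) 2) (by norm_num)
      have q3 : |2 * W.ux p.1 p.2| ≤ 2 * |B| := by
        rw [abs_mul, abs_two]; linarith [hBE p hp]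
      have q4 : |2 * (ψ p * Real.sin (n * p.1))| ≤ 2 * P := by
        rw [abs_mul, abs_two, abs_mul]
        have := mul_le_mul (hP p) (Real.abs_sin_le_one (n * p.1)) (abs_nonneg _) hP0
        rw [Real.norm_eq_abs] at this
        linarith
      have q5 := heb n hn p
      have q6 : |2 * W.ux p.1 p.2 + 2 * (ψ p * Real.sin (n * p.1)) + e n p| ≤ 2 * |B| + 2 * P + C :=
        (abs_add_le _ _).trans (add_le_add ((abs_add_le _ _).trans (add_le_add q3 q4)) q5)
      refine (abs_add_le _ _).trans (add_le_add ((abs_add_le _ _).trans (add_le_add q1 q2)) ?_)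
      rw [abs_mul]
      exact mul_le_mul q5 q6 (abs_nonneg _) hC
    have hRlim : Tendsto (fun n => ∫ p in E, R n p) atTop
        (𝓝 (∫ p in E, (W.ux p.1 p.2 ^ 2 + 1 / 2 * ψ p ^ 2))) := by
      refine tendsto_integral_filter_of_dominated_convergence
        (fun _ => (|B| ^ 2 + 1 / 2 * P ^ 2) + C * (2 * |B| + 2 * P + C)) ?_ ?_ ?_ ?_
      · filter_upwards [eventually_ge_atTop 1] with n hn
        exact (hRc n hn).aestronglyMeasurable hEm
      · filter_upwards [eventually_ge_atTop 1] with n hn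
        rw [ae_restrict_iff' hEm]
        exact Eventually.of_forall fun p hp => hRb n hn p hp
      · exact integrableOn_const hfin
      · rw [ae_restrict_iff' hEm]
        refine Eventually.of_forall fun p hp => ?_
        have t1 := (hpt p).mul_const (2 * W.ux p.1 p.2)
        have t2 := osc_tendsto (2 * ψ p) p.1 (hpt p)
        have t3 := (hpt p).mul (hpt p)
        have t4 := ((t1.add t2).add t3).const_add (W.ux p.1 p.2 ^ 2 + 1 / 2 * ψ p ^ 2)
        simp only [zero_mul, add_zero] at t4
        refine t4.congr fun n => ?_
        simp only [R, e]
        ring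
    have hsum := (hRlim.add rl1).sub rl2
    rw [add_zero, sub_zero] at hsum
    refine hsum.congr' ?_
    filter_upwards [eventually_ge_atTop 1] with n hn
    have iR := bdd_integrable hEm hfin (hRc n hn) _ (hRb n hn)
    have i12 : IntegrableOn (fun p : ℝ × ℝ => R n p + g1 p * Real.sin (n * p.1)) E := iR.add (i1 n)
    rw [← integral_add iR (i1 n), ← integral_sub i12 (i2 n)]
    congr 1
    ext p
    simp only [V, addPert, R, e, g1, g2]
    have : (2:ℝ) * n * p.1 = 2 * (n * p.1) := by ring
    rw [this, Real.cos_two_mul]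
    have hs := Real.sin_sq_add_cos_sq (n * p.1)
    have hs' : Real.cos (n * p.1) ^ 2 = 1 - Real.sin (n * p.1) ^ 2 := by linarith
    rw [hs']
    ring
  have hgain : (∫ p in E, W.ux p.1 p.2 ^ 2) + δ ^ 2 * (volume E).toReal / 8
      < ∫ p in E, (W.ux p.1 p.2 ^ 2 + 1 / 2 * ψ p ^ 2) := by
    rw [integral_add hux2 (hψ2.const_mul _), integral_const_mul]
    have k1 : ∫ p in E, (2 * δ * ψ p - δ ^ 2) ≤ ∫ p in E, ψ p ^ 2 := by
      have i0 : IntegrableOn (fun p => 2 * δ * ψ p - δ ^ 2) E :=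
        (hψi.const_mul _).sub (integrableOn_const hfin)
      apply setIntegral_mono_on i0 hψ2 hEm
      intro p _
      nlinarith [sq_nonneg (ψ p - δ)]
    rw [integral_sub (hψi.const_mul _) (integrableOn_const hfin), integral_const_mul,
      setIntegral_const, smul_eq_mul, Measure.real] at k1
    have k2 : 2 * δ * (3 / 4 * (δ * (volume E).toReal)) ≤ 2 * δ * ∫ p in E, ψ p :=
      mul_le_mul_of_nonneg_left (by linarith) (by linarith)
    have k3 : 0 < δ ^ 2 * (volume E).toReal := by positivity
    nlinarith
  have hgauge' : ∀ᶠ n in atTop, |Gauge sm sp b bx c f (V n).u (V n).vt (V n).ux E - GammaStar| < ε / 2 := by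
    have := ((hgauge.const_mul ((volume E).toReal)⁻¹).sub_const GammaStar).abs
    exact this.eventually_lt_const h7
  obtain ⟨n, n1, ngrad, ngauge, nJ, nη, nu, nut⟩ := ((eventually_ge_atTop 1).and (hgrad.and
    (hgauge'.and ((hJ.eventually_const_lt hgain).and ((hsmall η hη).and
    ((hsmall (ε / 2 - EssSupAbs T (fun x t => W.u x t - us x t)) (by linarith)).and
    (hsmall (ε / 2 - EssSupAbs T (fun x t => W.ut x t - ust x t)) (by linarith)))))))).exists
  have hcn := hCn n
  refine ⟨V n, ⟨hV1 n n1, hV2 n n1, ?_, ?_, ?_, ngrad, ngauge⟩, nJ.le, ?_⟩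
  · obtain ⟨A, hA1, hA2, hA3, hA4, hA5⟩ := cover_null E hEo (tsupport ψ) ψc ψE
    refine ⟨O ∪ A, hO1.union hA1, ?_, ?_, ?_, ?_, ?_⟩
    · rw [closure_union]; exact union_subset hO2 hA3
    · rw [closure_union]; exact hO3.union hA4
    · refine measure_mono_null ((frontier_union_subset O A).trans
        (union_subset_union inter_subset_left inter_subset_right)) ?_
      exact measure_union_null hO4 hA5
    · rintro p ⟨hp, hpc⟩
      rw [closure_union, mem_union, not_or] at hpc
      obtain ⟨z1, z2, -⟩ := (hφ n n1).1.z p.1 p.2 fun h => hpc.2 (subset_closure (hA2 h))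
      simp only [V, addPert, z1, z2, add_zero]
      exact hO5 p ⟨hp, hpc.1⟩
    · rintro p ⟨hp, hpc⟩
      rw [closure_union, mem_union, not_or] at hpc
      obtain ⟨z1, z2, -⟩ := (hφ n n1).1.z p.1 p.2 fun h => hpc.2 (subset_closure (hA2 h))
      have := pot_pert hcoeff (hφ n n1).1 hSO h1.cont p.1 p.2 hp
      rw [z1, mul_zero, add_zero] at this
      exact this.trans (hO6 p ⟨hp, hpc.1⟩)
  · refine essSup_pert T hT (fun x t => W.u x t - us x t) _ _ (C / n) (h1.cont.sub hus) (fun x t => ?_) (by linarith)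
    have : (V n).u x t - us x t - (W.u x t - us x t) = φx n x t := by simp only [V, addPert]; ring
    rw [this]; exact ((hφ n n1).2 x t).2.1
  · refine essSup_pert T hT (fun x t => W.ut x t - ust x t) _ _ (C / n) (h1.cont_t.sub hust) (fun x t => ?_) (by linarith)
    have : (V n).ut x t - ust x t - (W.ut x t - ust x t) = φxt n x t := by simp only [V, addPert]; ring
    rw [this]; exact ((hφ n n1).2 x t).2.2.2.1
  · intro x t
    obtain ⟨a1, a2, -⟩ := (hφ n n1).2 x t
    simp only [V, addPert, add_sub_cancel_left]
    constructor <;> linarith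
end

section
variable {α T r1 r2 mstar ε GammaStar : ℝ} {sigma sm sp : ℝ → ℝ}
    {b bx c f : ℝ → ℝ → ℝ} {d : ℝ → ℝ} {us ust vs : ℝ → ℝ → ℝ} {E : Set (ℝ × ℝ)}

/-- Smallness of the mean distance to the phases implies the `δ`-approximation condition. -/
lemma delta_of_small (hT : 0 < T) (hcoeff : CoeffHyp α T b bx c f d) (hEo : IsOpen E)
    (hE : E ⊆ OmegaT T)
    (hsm : ContinuousOn sm (Icc r1 r2)) (hsp : ContinuousOn sp (Icc r1 r2))
    (hsm' : MonotoneOn sm (Icc r1 r2)) (hsp' : MonotoneOn sp (Icc r1 r2))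
    (hsms : ∀ r ∈ Icc r1 r2, sigma (sm r) = r) (hsps : ∀ r ∈ Icc r1 r2, sigma (sp r) = r)
    (W : PairData)
    (hW : InAdmissible T r1 r2 mstar ε GammaStar sigma sm sp b bx c f us ust vs E W)
    (δ : ℝ) (hsmall : ∫ p in E, mfun sm sp b bx c f W p ≤ δ * (volume E).toReal) :
    DeltaApproxCond r1 r2 mstar δ sigma sm sp b bx c f E W := by
  obtain ⟨h1, h2, -, h4, h5, hU, h7⟩ := hW
  have hEm := hEo.measurableSet
  have hfin : volume E ≠ ⊤ := ne_top_of_le_ne_top (vol_omegaT T hT).2 (measure_mono hE)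
  obtain ⟨mc, mpos, ⟨M, hM⟩, -⟩ := mfun_props hT hcoeff hE hsm hsp W h1 h2 hU
  have mint : IntegrableOn (mfun sm sp b bx c f W) E :=
    bdd_integrable hEm hfin mc M fun p hp => by rw [abs_of_pos (mpos p hp)]; exact hM p hp
  refine le_trans ?_ hsmall
  refine integral_mono_of_nonneg (Eventually.of_forall fun p => Metric.infDist_nonneg) mint ?_
  rw [EventuallyLE, ae_restrict_iff' hEm]
  refine Eventually.of_forall fun p hp => ?_
  obtain ⟨g1, g2, g3, g4, g5, g6⟩ := hU p hp
  simp only at g3 g4 g5 g6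
  have key : ∀ s : ℝ, (s ∈ Icc (sm r1) (sm r2) ∨ s ∈ Icc (sp r1) (sp r2)) →
      GVal b c bx f W.u W.vt p.1 p.2 = sigma s →
      Metric.infDist (mk4 (W.ux p.1 p.2) (W.ut p.1 p.2) (W.vx p.1 p.2) (W.vt p.1 p.2))
      (KmatSet sigma sm sp r1 r2 mstar b c bx f W.u p.1 p.2) ≤ |W.ux p.1 p.2 - s| := by
    intro s hs hG
    have hmem : mk4 s (W.ut p.1 p.2) (W.u p.1 p.2) (W.vt p.1 p.2) ∈
        KmatSet sigma sm sp r1 r2 mstar b c bx f W.u p.1 p.2 :=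
      ⟨s, _, _, rfl, g2.le, hs, hG⟩
    refine (Metric.infDist_le_dist_of_mem hmem).trans (le_of_eq ?_)
    rw [EuclideanSpace.dist_eq, Fin.sum_univ_four, g1]
    simp [mk4, Real.dist_eq, Real.sqrt_sq_eq_abs]
  have hr : r1 ≤ r2 := (g3.trans g4).le
  have hGm : GVal b c bx f W.u W.vt p.1 p.2 ∈ Icc r1 r2 := ⟨g3.le, g4.le⟩
  have l1 : r1 ∈ Icc r1 r2 := left_mem_Icc.2 hr
  have l2 : r2 ∈ Icc r1 r2 := right_mem_Icc.2 hr
  refine le_min ?_ ?_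
  · refine (key _ (Or.inl ⟨hsm' l1 hGm g3.le, hsm' hGm l2 g4.le⟩) (hsms _ hGm).symm).trans ?_
    rw [abs_of_pos (by linarith)]
  · refine (key _ (Or.inr ⟨hsp' l1 hGm g3.le, hsp' hGm l2 g4.le⟩) (hsps _ hGm).symm).trans ?_
    rw [abs_of_neg (by linarith)]; linarith

/-- Iterating `step`. -/
lemma iterate_step (hT : 0 < T) (hcoeff : CoeffHyp α T b bx c f d) (hEo : IsOpen E)
    (hE : E ⊆ OmegaT T)
    (hsm : ContinuousOn sm (Icc r1 r2)) (hsp : ContinuousOn sp (Icc r1 r2))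
    (hus : ContinuousOn (fun p : ℝ × ℝ => us p.1 p.2) (ClOmegaT T))
    (hust : ContinuousOn (fun p : ℝ × ℝ => ust p.1 p.2) (ClOmegaT T))
    (δ : ℝ) (hδ : 0 < δ) (hEpos : 0 < (volume E).toReal)
    (Mx : ℝ) (hMx : ∀ W : PairData,
      InAdmissible T r1 r2 mstar ε GammaStar sigma sm sp b bx c f us ust vs E W →
      ∫ p in E, W.ux p.1 p.2 ^ 2 ≤ Mx) (n : ℕ) :
    ∀ W : PairData,
      InAdmissible T r1 r2 mstar ε GammaStar sigma sm sp b bx c f us ust vs E W →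
      Mx - n * (δ ^ 2 * (volume E).toReal / 8) < ∫ p in E, W.ux p.1 p.2 ^ 2 →
      ∀ η : ℝ, 0 < η → ∃ W' : PairData,
        InAdmissible T r1 r2 mstar ε GammaStar sigma sm sp b bx c f us ust vs E W' ∧
        ∫ p in E, mfun sm sp b bx c f W' p ≤ δ * (volume E).toReal ∧
        ∀ x t, |W'.u x t - W.u x t| ≤ η ∧ |W'.v x t - W.v x t| ≤ η := by
  induction n with
  | zero =>
    intro W hW h
    have := hMx W hW
    simp only [Nat.cast_zero, zero_mul, sub_zero] at h
    linarith
  | succ n ih =>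
    intro W hW h η hη
    by_cases hs : ∫ p in E, mfun sm sp b bx c f W p ≤ δ * (volume E).toReal
    · exact ⟨W, hW, hs, fun x t => by simp [hη.le]⟩
    · obtain ⟨W1, hW1, hJ, hd⟩ := step hT hcoeff hEo hE hsm hsp hus hust W hW δ hδ hEpos
        (not_le.1 hs) (η / 2) (half_pos hη)
      obtain ⟨W2, hW2, hm, hd2⟩ := ih W1 hW1 (by push_cast at h; linarith) (η / 2) (half_pos hη)
      refine ⟨W2, hW2, hm, fun x t => ?_⟩
      have a := hd x t
      have b := hd2 x t
      constructor
      · have := abs_sub_le (W2.u x t) (W1.u x t) (W.u x t); linarith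
      · have := abs_sub_le (W2.v x t) (W1.v x t) (W.v x t); linarith
end

lemma branch_mono {sigma sigma' : ℝ → ℝ} {D : Set ℝ} (hD : Convex ℝ D)
    (hd : ∀ s ∈ D, HasDerivWithinAt sigma (sigma' s) D s)
    (hpos : ∀ s ∈ interior D, 0 < sigma' s) : StrictMonoOn sigma D ∧ ContinuousOn sigma D := by
  have hc : ContinuousOn sigma D := fun s hs => (hd s hs).continuousWithinAt
  refine ⟨strictMonoOn_of_deriv_pos hD hc fun s hs => ?_, hc⟩
  rw [((hd s (interior_subset hs)).hasDerivAt (mem_interior_iff_mem_nhds.1 hs)).deriv]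
  exact hpos s hs

/-- Density Lemma. For each `δ > 0`, the set `𝒜_δ` of `δ`-approximating
subsolutions is dense in the admissible set `𝒜` for the `L∞(Ω_T;ℝ²)` norm. -/
theorem density_lemma
    (α s1 s2 lam Lam T s1star s2star r1 r2 x0 lamt Lamt mstar GammaStar ε : ℝ)
    (sigma sigma' sm sp sigmat sigmat' : ℝ → ℝ)
    (b bx c f : ℝ → ℝ → ℝ) (d : ℝ → ℝ) (u0 u0' u0'' : ℝ → ℝ)
    (us usx usxx ust : ℝ → ℝ → ℝ)
    (hT : 0 < T)
    (hflux : FluxHyp α s1 s2 lam Lam sigma sigma')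
    (hcoeff : CoeffHyp α T b bx c f d)
    (hinit : InitHyp α u0 u0' u0'')
    (hs1star : 0 ≤ s1star) (hs1star' : s1star < s1) (hs1star_eq : sigma s1star = sigma s2)
    (hs2star : s2 < s2star) (hs2star_eq : sigma s2star = sigma s1)
    (hsm : ∀ r ∈ Icc (sigma s2) (sigma s1), sm r ∈ Icc s1star s1 ∧ sigma (sm r) = r)
    (hsp : ∀ r ∈ Icc (sigma s2) (sigma s1), sp r ∈ Icc s2 s2star ∧ sigma (sp r) = r)
    (hr1 : sigma s2 < r1) (hr12 : r1 < r2) (hr2 : r2 < sigma s1)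
    (hx0 : x0 ∈ Ioo (0:ℝ) 1) (hx0l : sm r1 < u0' x0) (hx0r : u0' x0 < sp r2)
    (htilde : TildeHyp α r1 r2 lamt Lamt sigma sm sp sigmat sigmat')
    (hstar : StarSol α T sigmat sigmat' b bx c f u0 us usx usxx ust)
    (hmstar : mstar = EssSupAbs T ust + 1)
    (hGammaStar : GammaStar = Gauge sm sp b bx c f us (VStarT sigmat b bx c f us usx) usx
      (Omega2 T (sm r1) (sp r2) usx))
    (hε : 0 < ε) :
    ∀ δ : ℝ, 0 < δ →
      ∀ W : PairData,
        InAdmissible T r1 r2 mstar ε GammaStar sigma sm sp b bx c f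
          us ust (VStar sigmat b bx c f u0 us usx) (Omega2 T (sm r1) (sp r2) usx) W →
        ∀ η : ℝ, 0 < η →
          ∃ W' : PairData,
            InAdmissible T r1 r2 mstar ε GammaStar sigma sm sp b bx c f
              us ust (VStar sigmat b bx c f u0 us usx) (Omega2 T (sm r1) (sp r2) usx) W' ∧
            DeltaApproxCond r1 r2 mstar δ sigma sm sp b bx c f
              (Omega2 T (sm r1) (sp r2) usx) W' ∧
            EssSupAbs T (fun x t =>
              Real.sqrt ((W'.u x t - W.u x t) ^ 2 + (W'.v x t - W.v x t) ^ 2)) < η := by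
  intro δ hδ W hW η hη
  set E := Omega2 T (sm r1) (sp r2) usx with hEdef
  have hE : E ⊆ OmegaT T := fun p hp => hp.1
  have hEo : IsOpen E := by
    have := (hstar.reg.cont_x.mono (omegaT_sub T)).isOpen_inter_preimage (omegaT_open T)
      (isOpen_Ioo (a := sm r1) (b := sp r2))
    exact this
  have hfin : volume E ≠ ⊤ := ne_top_of_le_ne_top (vol_omegaT T hT).2 (measure_mono hE)
  obtain ⟨m1, c1⟩ := branch_mono (convex_Iic s1) hflux.deriv_left fun s hs => by
    rw [interior_Iic] at hs; exact hflux.deriv_pos s (Or.inl hs)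
  obtain ⟨m2, c2⟩ := branch_mono (convex_Ici s2) hflux.deriv_right fun s hs => by
    rw [interior_Ici] at hs; exact hflux.deriv_pos s (Or.inr hs)
  obtain ⟨smm, smc⟩ := branch_cont sigma sm s1star s1 _ _ (m1.mono Icc_subset_Iic_self)
    (c1.mono Icc_subset_Iic_self) hsm
  obtain ⟨spm, spc⟩ := branch_cont sigma sp s2 s2star _ _ (m2.mono Icc_subset_Ici_self)
    (c2.mono Icc_subset_Ici_self) hsp
  have hsub : Icc r1 r2 ⊆ Icc (sigma s2) (sigma s1) := Icc_subset_Icc hr1.le hr2.le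
  have hdelta := fun W' hW' h => delta_of_small (us := us) (ust := ust)
    (vs := VStar sigmat b bx c f u0 us usx) (mstar := mstar) (ε := ε) (GammaStar := GammaStar)
    hT hcoeff hEo hE (smc.mono hsub)
    (spc.mono hsub) (smm.monotoneOn.mono hsub) (spm.monotoneOn.mono hsub)
    (fun r hr => (hsm r (hsub hr)).2) (fun r hr => (hsp r (hsub hr)).2) W' hW' δ h
  rcases (ENNReal.toReal_nonneg (a := volume E)).eq_or_lt with h0 | hpos
  · refine ⟨W, hW, hdelta W hW ?_, ?_⟩
    · have hz : volume E = 0 := by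
        rcases (ENNReal.toReal_eq_zero_iff _).1 h0.symm with h | h
        · exact h
        · exact absurd h hfin
      rw [setIntegral_measure_zero _ hz, ← h0, mul_zero]
    · refine lt_of_le_of_lt (essSup_le' T hT _ 0 (Eventually.of_forall fun p => ?_)) hη
      simp
  · have hMx : ∀ W : PairData,
        InAdmissible T r1 r2 mstar ε GammaStar sigma sm sp b bx c f us ust
          (VStar sigmat b bx c f u0 us usx) E W →
        ∫ p in E, W.ux p.1 p.2 ^ 2 ≤ s2star ^ 2 * (volume E).toReal := by
      rintro W ⟨-, -, -, -, -, hU, -⟩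
      have hb : ∀ p ∈ E, ‖W.ux p.1 p.2 ^ 2‖ ≤ s2star ^ 2 := by
        intro p hp
        obtain ⟨-, -, g3, g4, g5, g6⟩ := hU p hp
        simp only at g3 g4 g5 g6
        have hG := hsub (⟨g3.le, g4.le⟩ : GVal b c bx f W.u W.vt p.1 p.2 ∈ Icc r1 r2)
        have k1 := (hsm _ hG).1.1
        have k2 := (hsp _ hG).1.2
        rw [Real.norm_eq_abs, abs_of_nonneg (sq_nonneg _)]
        exact pow_le_pow_left₀ (by linarith) (by linarith) 2
      exact (le_abs_self _).trans (norm_setIntegral_le_of_norm_le_const hfin.lt_top hb)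
    have hc : 0 < δ ^ 2 * (volume E).toReal / 8 := by positivity
    obtain ⟨n, hn⟩ := exists_nat_gt
      ((s2star ^ 2 * (volume E).toReal - ∫ p in E, W.ux p.1 p.2 ^ 2)
        / (δ ^ 2 * (volume E).toReal / 8))
    rw [div_lt_iff₀ hc] at hn
    obtain ⟨W', hW', hm, hd⟩ := iterate_step hT hcoeff hEo hE (smc.mono hsub) (spc.mono hsub)
      hstar.reg.cont hstar.reg.cont_t δ hδ hpos _ hMx n W hW (by linarith) (η / 4) (by linarith)
    refine ⟨W', hW', hdelta W' hW' hm, ?_⟩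
    refine lt_of_le_of_lt (essSup_le' T hT _ (η / 2) (Eventually.of_forall fun p => ?_))
      (by linarith : η / 2 < η)
    obtain ⟨a1, a2⟩ := hd p.1 p.2
    rw [abs_of_nonneg (Real.sqrt_nonneg _)]
    refine Real.sqrt_le_iff.2 ⟨by linarith, ?_⟩
    have b1 := sq_le_sq' (abs_le.1 a1).1 (abs_le.1 a1).2
    have b2 := sq_le_sq' (abs_le.1 a2).1 (abs_le.1 a2).2
    nlinarith
end
end

section
/- Let Q = (x1,x2)×(t1,t2) ⊂ ℝ² be an open rectangle with x2 > x1 and t2 > t1. Given any λ1 > 0, λ2 > 0 and ε > 0, there exists a smooth function ω = (φ,ψ) : ℝ² → ℝ² with compact support contained in Q such that: (a) ‖ω‖_{L∞(Q)} < ε, ‖φ_t‖_{L∞(Q)} < ε, ‖ψ_t‖_{L∞(Q)} < ε; (b) −λ1 ≤ φ_x ≤ λ2 in Q; (c) | |{(x,t) ∈ Q : φ_x(x,t) = −λ1}| − (λ2/(λ1+λ2))|Q| | < ε and | |{(x,t) ∈ Q : φ_x(x,t) = λ2}| − (λ1/(λ1+λ2))|Q| | < ε; (d) ψ_x = φ in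 Q; and (e) ∫_{x1}^{x2} φ(x,t) dx = 0 for all t ∈ (t1,t2). -/
open MeasureTheory Set
noncomputable section

lemma base_step (δ : ℝ) (hδ : 0 < δ) : ∃ (F F1 s : ℝ → ℝ) (c d : ℝ),
    (∀ x, HasDerivAt F (F1 x) x) ∧ (∀ x, HasDerivAt F1 (s x) x) ∧
    ContDiff ℝ (⊤ : ℕ∞) F ∧ (∀ x, 0 ≤ s x) ∧ (∀ x, s x ≤ 1) ∧
    (∀ x ≤ 0, s x = 0) ∧ (∀ x, δ ≤ x → s x = 1) ∧ (∀ x ≤ 0, F x = 0) ∧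
    (∀ x, δ ≤ x → F x = x ^ 2 / 2 + c * x + d) := by
  set s : ℝ → ℝ := fun x => Real.smoothTransition (x / δ) with hs
  have hsc : ContDiff ℝ (⊤ : ℕ∞) s := by
    exact Real.smoothTransition.contDiff.comp (contDiff_id.div_const δ)
  have hcont := hsc.continuous
  set F1 : ℝ → ℝ := fun x => ∫ y in (0:ℝ)..x, s y with hF1
  have d1 : ∀ x, HasDerivAt F1 (s x) x := fun x => (hcont.integral_hasStrictDerivAt 0 x).hasDerivAt
  have hF1d : Differentiable ℝ F1 := fun x => (d1 x).differentiableAt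
  have hF1c : Continuous F1 := hF1d.continuous
  set F : ℝ → ℝ := fun x => ∫ y in (0:ℝ)..x, F1 y with hF
  have d2 : ∀ x, HasDerivAt F (F1 x) x := fun x => (hF1c.integral_hasStrictDerivAt 0 x).hasDerivAt
  have s0 : ∀ x ≤ 0, s x = 0 := fun x hx =>
    Real.smoothTransition.zero_of_nonpos (div_nonpos_of_nonpos_of_nonneg hx hδ.le)
  have s1 : ∀ x, δ ≤ x → s x = 1 := fun x hx =>
    Real.smoothTransition.one_of_one_le ((one_le_div hδ).2 hx)
  have F10 : ∀ x ≤ 0, F1 x = 0 := by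
    intro x hx
    have : F1 x = ∫ y in (0:ℝ)..x, (0:ℝ) := by
      apply intervalIntegral.integral_congr
      intro y hy
      rw [uIcc_of_ge hx] at hy
      exact s0 y hy.2
    simpa using this
  have F0 : ∀ x ≤ 0, F x = 0 := by
    intro x hx
    have : F x = ∫ y in (0:ℝ)..x, (0:ℝ) := by
      apply intervalIntegral.integral_congr
      intro y hy
      rw [uIcc_of_ge hx] at hy
      exact F10 y hy.2
    simpa using this
  have F11 : ∀ x, δ ≤ x → F1 x = F1 δ + (x - δ) := by
    intro x hx
    have h : ∫ y in δ..x, s y = ∫ y in δ..x, (1:ℝ) := by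
      apply intervalIntegral.integral_congr
      intro y hy
      rw [uIcc_of_le hx] at hy
      exact s1 y hy.1
    have h2 := intervalIntegral.integral_add_adjacent_intervals
      (hcont.intervalIntegrable 0 δ) (hcont.intervalIntegrable (μ := volume) δ x)
    rw [h] at h2
    simp only [intervalIntegral.integral_const, smul_eq_mul, mul_one] at h2
    exact h2.symm
  have FF : ∀ x, δ ≤ x → F x = F δ + ((F1 δ - δ) * (x - δ) + (x ^ 2 - δ ^ 2) / 2) := by
    intro x hx
    have h : ∫ y in δ..x, F1 y = ∫ y in δ..x, ((F1 δ - δ) + y) := by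
      apply intervalIntegral.integral_congr
      intro y hy
      rw [uIcc_of_le hx] at hy
      have := F11 y hy.1
      change F1 y = F1 δ - δ + y
      rw [this]; ring
    have h2 := intervalIntegral.integral_add_adjacent_intervals
      (hF1c.intervalIntegrable 0 δ) (hF1c.intervalIntegrable (μ := volume) δ x)
    rw [h, intervalIntegral.integral_add (by simp) (by simp)] at h2
    simp only [intervalIntegral.integral_const, smul_eq_mul, integral_id] at h2
    rw [mul_comm (F1 δ - δ)]
    exact h2.symm
  refine ⟨F, F1, s, F1 δ - δ, F δ - (F1 δ - δ) * δ - δ ^ 2 / 2, d2, d1, ?_,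
    fun x => Real.smoothTransition.nonneg _, fun x => Real.smoothTransition.le_one _, s0, s1, F0, ?_⟩
  · rw [contDiff_infty_iff_deriv]
    refine ⟨fun x => (d2 x).differentiableAt, ?_⟩
    rw [show deriv F = F1 from funext fun x => (d2 x).deriv, contDiff_infty_iff_deriv]
    refine ⟨hF1d, ?_⟩
    rwa [show deriv F1 = s from funext fun x => (d1 x).deriv]
  · intro x hx
    rw [FF x hx]; ring

def Good (l1 l2 η a b B1 B0 : ℝ) (G : ℝ → ℝ) : Prop :=
  ContDiff ℝ (⊤ : ℕ∞) G ∧ tsupport G ⊆ Ioo a b ∧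
  (∀ x, |G x| ≤ B0) ∧ (∀ x, |deriv G x| ≤ B1) ∧
  (∀ x, -l1 ≤ deriv (deriv G) x ∧ deriv (deriv G) x ≤ l2) ∧
  (l2 / (l1 + l2) - η) * (b - a) ≤ volume.real {x ∈ Ioo a b | deriv (deriv G) x = -l1} ∧
  (l1 / (l1 + l2) - η) * (b - a) ≤ volume.real {x ∈ Ioo a b | deriv (deriv G) x = l2}

lemma deriv_zero_of_notMem {G : ℝ → ℝ} {x : ℝ} (h : x ∉ tsupport G) :
    G x = 0 ∧ deriv G x = 0 ∧ deriv (deriv G) x = 0 := by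
  have h1 : x ∉ tsupport (deriv G) := fun h' => h (closure_minimal support_deriv_subset
    (isClosed_tsupport G) h')
  exact ⟨image_eq_zero_of_notMem_tsupport h, image_eq_zero_of_notMem_tsupport h1,
    image_eq_zero_of_notMem_tsupport (fun h' => h1 (tsupport_deriv_subset h'))⟩

lemma good_base (l1 l2 η a b : ℝ) (h1 : 0 < l1) (h2 : 0 < l2) (hη : 0 < η) (hab : a < b) :
    ∃ G, Good l1 l2 η a b ((l1 + l2) * (b - a)) ((l1 + l2) * (b - a) ^ 2) G := by
  obtain ⟨θ, hθ⟩ : ∃ θ, θ = l2 / (l1 + l2) := ⟨_, rfl⟩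
  have hθ1 : θ * (l1 + l2) = l2 := by rw [hθ]; field_simp
  have hθ0 : 0 < θ := by rw [hθ]; positivity
  have hθ' : l1 / (l1 + l2) = 1 - θ := by rw [hθ]; field_simp; ring
  have hθlt : 0 < 1 - θ := by rw [← hθ']; positivity
  have hL : 0 < b - a := sub_pos.2 hab
  obtain ⟨δ, hδ, hδη, hδ1, hδ2⟩ : ∃ δ : ℝ, 0 < δ ∧ 6 * δ ≤ η * (b - a) ∧
      6 * δ ≤ θ * (b - a) ∧ 6 * δ ≤ (1 - θ) * (b - a) := by
    refine ⟨min (η * (b - a)) (min (θ * (b - a)) ((1 - θ) * (b - a))) / 6, by positivity, ?_, ?_, ?_⟩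
    · have := min_le_left (η * (b - a)) (min (θ * (b - a)) ((1 - θ) * (b - a))); linarith
    · have := (min_le_right (η * (b - a)) (min (θ * (b - a)) ((1 - θ) * (b - a)))).trans
        (min_le_left _ _); linarith
    · have := (min_le_right (η * (b - a)) (min (θ * (b - a)) ((1 - θ) * (b - a)))).trans
        (min_le_right _ _); linarith
  obtain ⟨F, F1, s, c, d, d2, d1, hF, sn, sl, s0, s1, F0, FF⟩ := base_step δ hδ
  obtain ⟨m, hm⟩ : ∃ m, m = (a + b) / 2 := ⟨_, rfl⟩
  obtain ⟨u, hu⟩ : ∃ u, u = (b - a) / 2 - 2 * δ := ⟨_, rfl⟩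
  obtain ⟨v, hv⟩ : ∃ v, v = u * θ := ⟨_, rfl⟩
  have hvl : v * (l1 + l2) = u * l2 := by rw [hv, mul_assoc, hθ1]
  have hδθ : δ * θ ≤ δ := by nlinarith
  have hδθ' : 0 < δ * θ := by positivity
  have hv1 : δ ≤ 2 * v := by rw [hv, hu]; nlinarith
  have hv2 : δ ≤ u - v := by rw [hv, hu]; nlinarith
  set G : ℝ → ℝ := fun x => l2 * F (x - (m - u)) - (l1 + l2) * F (x - (m - v))
    + (l1 + l2) * F (x - (m + v)) - l2 * F (x - (m + u)) with hG
  set G1 : ℝ → ℝ := fun x => l2 * F1 (x - (m - u)) - (l1 + l2) * F1 (x - (m - v))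
    + (l1 + l2) * F1 (x - (m + v)) - l2 * F1 (x - (m + u)) with hG1
  set G2 : ℝ → ℝ := fun x => l2 * s (x - (m - u)) - (l1 + l2) * s (x - (m - v))
    + (l1 + l2) * s (x - (m + v)) - l2 * s (x - (m + u)) with hG2
  have D1 : ∀ x, HasDerivAt G (G1 x) x := fun x =>
    (((((d2 _).comp_sub_const x (m - u)).const_mul l2).sub
      (((d2 _).comp_sub_const x (m - v)).const_mul (l1 + l2))).add
      (((d2 _).comp_sub_const x (m + v)).const_mul (l1 + l2))).sub
      (((d2 _).comp_sub_const x (m + u)).const_mul l2)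
  have D2 : ∀ x, HasDerivAt G1 (G2 x) x := fun x =>
    (((((d1 _).comp_sub_const x (m - u)).const_mul l2).sub
      (((d1 _).comp_sub_const x (m - v)).const_mul (l1 + l2))).add
      (((d1 _).comp_sub_const x (m + v)).const_mul (l1 + l2))).sub
      (((d1 _).comp_sub_const x (m + u)).const_mul l2)
  have e1 : deriv G = G1 := funext fun x => (D1 x).deriv
  have e2 : deriv G1 = G2 := funext fun x => (D2 x).deriv
  have hGs : ContDiff ℝ (⊤ : ℕ∞) G := by
    have := fun p : ℝ => hF.comp (contDiff_id.sub (contDiff_const (c := p)))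
    exact (((contDiff_const.mul (this _)).sub (contDiff_const.mul (this _))).add
      (contDiff_const.mul (this _))).sub (contDiff_const.mul (this _))
  have hsupp : tsupport G ⊆ Ioo a b := by
    have : tsupport G ⊆ Icc (m - u) (m + u + δ) := by
      apply closure_minimal _ isClosed_Icc
      intro x hx
      by_contra hcon
      apply hx
      rw [mem_Icc, not_and_or, not_le, not_le] at hcon
      rcases hcon with h | h
      · simp only [hG]
        rw [F0 _ (by linarith), F0 _ (by linarith), F0 _ (by linarith), F0 _ (by linarith)]
        ring
      · simp only [hG]
        rw [FF _ (by linarith), FF _ (by linarith), FF _ (by linarith), FF _ (by linarith)]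
        linear_combination (2 * m - 2 * x - 2 * c) * hvl
    refine this.trans (fun x hx => ⟨?_, ?_⟩)
    · have := hx.1; rw [hm, hu] at this; linarith
    · have := hx.2; rw [hm, hu] at this; linarith
  have hbd : ∀ x, -l1 ≤ G2 x ∧ G2 x ≤ l2 := by
    intro x
    simp only [hG2]
    have q1 : ∀ y, 0 ≤ l2 * s y ∧ l2 * s y ≤ l2 := fun y =>
      ⟨mul_nonneg h2.le (sn y), mul_le_of_le_one_right h2.le (sl y)⟩
    have q2 : ∀ y, 0 ≤ (l1 + l2) * s y ∧ (l1 + l2) * s y ≤ l1 + l2 := fun y =>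
      ⟨mul_nonneg (by linarith) (sn y), mul_le_of_le_one_right (by linarith) (sl y)⟩
    have a1 := q1 (x - (m - u))
    have a2 := q2 (x - (m - v))
    have a3 := q2 (x - (m + v))
    have a4 := q1 (x - (m + u))
    rcases le_total x (m - v) with h | h
    · rw [s0 (x - (m - v)) (by linarith), s0 (x - (m + v)) (by linarith),
        s0 (x - (m + u)) (by linarith)]
      constructor <;> linarith
    · rw [s1 (x - (m - u)) (by linarith)]
      rcases le_total x (m + v) with h | h
      · rw [s0 (x - (m + v)) (by linarith), s0 (x - (m + u)) (by linarith)]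
        constructor <;> linarith
      · rw [s1 (x - (m - v)) (by linarith)]
        rcases le_total x (m + u) with h | h
        · rw [s0 (x - (m + u)) (by linarith)]
          constructor <;> linarith
        · rw [s1 (x - (m + v)) (by linarith)]
          constructor <;> linarith
  have hz : ∀ x, x ∉ Ioo a b → G x = 0 ∧ G1 x = 0 := by
    intro x hx
    have := deriv_zero_of_notMem (fun h => hx (hsupp h))
    rw [e1] at this
    exact ⟨this.1, this.2.1⟩
  have hM : ∀ x, ‖G2 x‖ ≤ l1 + l2 := fun x => by
    rw [Real.norm_eq_abs, abs_le]; have := hbd x; constructor <;> linarith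
  have hB1 : ∀ x, |G1 x| ≤ (l1 + l2) * (b - a) := by
    intro x
    by_cases hx : x ∈ Ioo a b
    · have := convex_univ.norm_image_sub_le_of_norm_hasDerivWithin_le
        (fun y _ => (D2 y).hasDerivWithinAt) (fun y _ => hM y) (mem_univ a) (mem_univ x)
      rw [(hz a (by simp)).2, sub_zero, Real.norm_eq_abs, Real.norm_eq_abs,
        abs_of_pos (sub_pos.2 hx.1)] at this
      refine this.trans ?_
      have := hx.2
      gcongr
    · rw [(hz x hx).2]; simp; positivity
  have hB0 : ∀ x, |G x| ≤ (l1 + l2) * (b - a) ^ 2 := by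
    intro x
    by_cases hx : x ∈ Ioo a b
    · have := convex_univ.norm_image_sub_le_of_norm_hasDerivWithin_le
        (fun y _ => (D1 y).hasDerivWithinAt) (fun y _ => hB1 y) (mem_univ a) (mem_univ x)
      rw [(hz a (by simp)).1, sub_zero, Real.norm_eq_abs, Real.norm_eq_abs,
        abs_of_pos (sub_pos.2 hx.1)] at this
      refine this.trans ?_
      have := hx.2
      rw [pow_two, ← mul_assoc]
      gcongr
    · rw [(hz x hx).1]; simp; positivity
  refine ⟨G, hGs, hsupp, hB0, by rwa [e1], by rwa [e1, e2], ?_, ?_⟩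
  · rw [e1, e2, ← hθ]
    have hsub : Icc (m - v + δ) (m + v) ⊆ {x ∈ Ioo a b | G2 x = -l1} := by
      intro x hx
      have h3 := hx.1
      have h4 := hx.2
      refine ⟨⟨by linarith, by linarith⟩, ?_⟩
      simp only [hG2]
      rw [s1 (x - (m - u)) (by linarith), s1 (x - (m - v)) (by linarith),
        s0 (x - (m + v)) (by linarith), s0 (x - (m + u)) (by linarith)]
      ring
    have := measureReal_mono (μ := volume) hsub
      (measure_ne_top_of_subset (sep_subset _ _) (by simp))
    rw [Real.volume_real_Icc_of_le (by linarith)] at this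
    refine le_trans ?_ this
    rw [hv, hu]
    nlinarith
  · rw [e1, e2, hθ']
    have hsub : Icc (m - u + δ) (m - v) ∪ Ioc (m + v + δ) (m + u) ⊆ {x ∈ Ioo a b | G2 x = l2} := by
      rintro x (hx | hx)
      · have h3 := hx.1
        have h4 := hx.2
        refine ⟨⟨by linarith, by linarith⟩, ?_⟩
        simp only [hG2]
        rw [s1 (x - (m - u)) (by linarith), s0 (x - (m - v)) (by linarith),
          s0 (x - (m + v)) (by linarith), s0 (x - (m + u)) (by linarith)]
        ring
      · have h3 := hx.1
        have h4 := hx.2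
        refine ⟨⟨by linarith, by linarith⟩, ?_⟩
        simp only [hG2]
        rw [s1 (x - (m - u)) (by linarith), s1 (x - (m - v)) (by linarith),
          s1 (x - (m + v)) (by linarith), s0 (x - (m + u)) (by linarith)]
        ring
    have := measureReal_mono (μ := volume) hsub
      (measure_ne_top_of_subset (sep_subset _ _) (by simp))
    rw [measureReal_union ?_ measurableSet_Ioc (by simp) (by simp), Real.volume_real_Icc_of_le (by linarith),
      Real.volume_real_Ioc_of_le (by linarith)] at this
    · refine le_trans ?_ this
      rw [hv, hu]
      nlinarith
    · rw [Set.disjoint_left]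
      intro x hx hx'
      have := hx.2
      have := hx'.1
      linarith

lemma good_glue (l1 l2 η a m b B1 B0 : ℝ) (h1 : 0 < l1) (h2 : 0 < l2) (ham : a < m) (hmb : m < b)
    (Gl Gr : ℝ → ℝ) (hl : Good l1 l2 η a m B1 B0 Gl) (hr : Good l1 l2 η m b B1 B0 Gr) :
    Good l1 l2 η a b B1 B0 (fun x => Gl x + Gr x) := by
  obtain ⟨cl, sl, bl0, bl1, bl2, ml1, ml2⟩ := hl
  obtain ⟨cr, sr, br0, br1, br2, mr1, mr2⟩ := hr
  have dl := (contDiff_infty_iff_deriv.1 cl)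
  have dr := (contDiff_infty_iff_deriv.1 cr)
  have dl1 := (contDiff_infty_iff_deriv.1 dl.2)
  have dr1 := (contDiff_infty_iff_deriv.1 dr.2)
  have e1 : deriv (fun x => Gl x + Gr x) = fun x => deriv Gl x + deriv Gr x :=
    funext fun x => deriv_fun_add (dl.1 x) (dr.1 x)
  have e2 : deriv (fun x => deriv Gl x + deriv Gr x) =
      fun x => deriv (deriv Gl) x + deriv (deriv Gr) x :=
    funext fun x => deriv_fun_add (dl1.1 x) (dr1.1 x)
  have zl : ∀ x, m ≤ x → Gl x = 0 ∧ deriv Gl x = 0 ∧ deriv (deriv Gl) x = 0 := fun x hx =>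
    deriv_zero_of_notMem (fun h => absurd (sl h).2 (not_lt.2 hx))
  have zr : ∀ x, x ≤ m → Gr x = 0 ∧ deriv Gr x = 0 ∧ deriv (deriv Gr) x = 0 := fun x hx =>
    deriv_zero_of_notMem (fun h => absurd (sr h).1 (not_lt.2 hx))
  have key : ∀ v : ℝ, volume.real {x ∈ Ioo a m | deriv (deriv Gl) x = v} +
      volume.real {x ∈ Ioo m b | deriv (deriv Gr) x = v} ≤
      volume.real {x ∈ Ioo a b | deriv (deriv Gl) x + deriv (deriv Gr) x = v} := by
    intro v
    rw [← measureReal_union ?_ ?_ (measure_ne_top_of_subset (sep_subset _ _) (by simp))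
      (measure_ne_top_of_subset (sep_subset _ _) (by simp))]
    · apply measureReal_mono _ (measure_ne_top_of_subset (sep_subset _ _) (by simp))
      rintro x (⟨hx, hv⟩ | ⟨hx, hv⟩)
      · exact ⟨⟨hx.1, hx.2.trans hmb⟩, by rw [(zr x hx.2.le).2.2, hv, add_zero]⟩
      · exact ⟨⟨ham.trans hx.1, hx.2⟩, by rw [(zl x hx.1.le).2.2, hv, zero_add]⟩
    · rw [Set.disjoint_left]
      intro x hx hx'
      exact absurd hx.1.2 (not_lt.2 hx'.1.1.le)
    · exact measurableSet_Ioo.inter (measurableSet_eq_fun (measurable_deriv _) measurable_const)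
  refine ⟨cl.add cr, ?_, ?_, ?_, ?_, ?_, ?_⟩
  · refine (tsupport_add Gl Gr).trans (union_subset (sl.trans ?_) (sr.trans ?_))
    · exact Ioo_subset_Ioo_right hmb.le
    · exact Ioo_subset_Ioo_left ham.le
  · intro x
    rcases le_total x m with h | h
    · simpa [(zr x h).1] using bl0 x
    · simpa [(zl x h).1] using br0 x
  · intro x
    rw [e1]
    rcases le_total x m with h | h
    · simpa [(zr x h).2.1] using bl1 x
    · simpa [(zl x h).2.1] using br1 x
  · intro x
    rw [e1, e2]
    rcases le_total x m with h | h
    · simpa [(zr x h).2.2] using bl2 x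
    · simpa [(zl x h).2.2] using br2 x
  · rw [e1, e2]
    have := key (-l1)
    linarith
  · rw [e1, e2]
    have := key l2
    linarith

lemma good_iter (l1 l2 η : ℝ) (h1 : 0 < l1) (h2 : 0 < l2) (hη : 0 < η) (n : ℕ) :
    ∀ a b : ℝ, a < b →
    ∃ G, Good l1 l2 η a b ((l1 + l2) * (b - a) / 2 ^ n) ((l1 + l2) * (b - a) ^ 2 / 2 ^ n) G := by
  induction n with
  | zero => intro a b hab; simpa using good_base l1 l2 η a b h1 h2 hη hab
  | succ n ih =>
    intro a b hab
    have ham : a < (a + b) / 2 := by linarith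
    have hmb : (a + b) / 2 < b := by linarith
    obtain ⟨Gl, hl⟩ := ih _ _ ham
    obtain ⟨Gr, hr⟩ := ih _ _ hmb
    have E1 : (a + b) / 2 - a = (b - a) / 2 := by ring
    have E2 : b - (a + b) / 2 = (b - a) / 2 := by ring
    rw [E1] at hl
    rw [E2] at hr
    have := good_glue l1 l2 η a _ b _ _ h1 h2 ham hmb Gl Gr hl hr
    refine ⟨_, this.1, this.2.1, fun x => (this.2.2.1 x).trans ?_,
      fun x => (this.2.2.2.1 x).trans ?_, this.2.2.2.2⟩
    · have p : 0 ≤ (l1 + l2) * (b - a) ^ 2 / 2 ^ (n + 1) := by positivity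
      have q : (l1 + l2) * ((b - a) / 2) ^ 2 / 2 ^ n =
          (l1 + l2) * (b - a) ^ 2 / 2 ^ (n + 1) / 2 := by
        rw [pow_succ (2:ℝ) n]; field_simp
      linarith
    · apply le_of_eq; rw [pow_succ]; field_simp

lemma good_small (l1 l2 η a b κ : ℝ) (h1 : 0 < l1) (h2 : 0 < l2) (hη : 0 < η) (hab : a < b)
    (hκ : 0 < κ) : ∃ G, Good l1 l2 η a b κ κ G := by
  have hL : 0 < b - a := sub_pos.2 hab
  obtain ⟨n, hn⟩ := pow_unbounded_of_one_lt
    (((l1 + l2) * (b - a) + (l1 + l2) * (b - a) ^ 2) / κ) (one_lt_two : (1:ℝ) < 2)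
  rw [div_lt_iff₀ hκ] at hn
  have p1 : 0 < (l1 + l2) * (b - a) := by positivity
  have p2 : 0 < (l1 + l2) * (b - a) ^ 2 := by positivity
  obtain ⟨G, this⟩ := good_iter l1 l2 η h1 h2 hη n a b hab
  refine ⟨G, this.1, this.2.1, fun x => (this.2.2.1 x).trans ?_,
      fun x => (this.2.2.2.1 x).trans ?_, this.2.2.2.2⟩
  · rw [div_le_iff₀ (by positivity)]; linarith
  · rw [div_le_iff₀ (by positivity)]; linarith

/-- technical lemma for local patching. On an open rectangle
`Q = (x1,x2) × (t1,t2)`, given `λ1, λ2, ε > 0` there is a smooth, compactly supported pair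
`ω = (φ,ψ)` with small sup-norms, `φ_x ∈ [-λ1, λ2]`, prescribed (up to `ε`) measures for the
two slope phases, `ψ_x = φ`, and zero spatial means. -/
theorem exists_patching_pair
    (x1 x2 t1 t2 lam1 lam2 ε : ℝ) (hx : x1 < x2) (ht : t1 < t2)
    (h1 : 0 < lam1) (h2 : 0 < lam2) (hε : 0 < ε) :
    ∃ φ ψ : ℝ → ℝ → ℝ,
      ContDiff ℝ (⊤ : ℕ∞) (fun p : ℝ × ℝ => φ p.1 p.2) ∧
      ContDiff ℝ (⊤ : ℕ∞) (fun p : ℝ × ℝ => ψ p.1 p.2) ∧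
      HasCompactSupport (fun p : ℝ × ℝ => φ p.1 p.2) ∧
      HasCompactSupport (fun p : ℝ × ℝ => ψ p.1 p.2) ∧
      tsupport (fun p : ℝ × ℝ => φ p.1 p.2) ⊆ Ioo x1 x2 ×ˢ Ioo t1 t2 ∧
      tsupport (fun p : ℝ × ℝ => ψ p.1 p.2) ⊆ Ioo x1 x2 ×ˢ Ioo t1 t2 ∧
      -- (a)
      sSup ((fun p : ℝ × ℝ => Real.sqrt ((φ p.1 p.2) ^ 2 + (ψ p.1 p.2) ^ 2))
        '' (Ioo x1 x2 ×ˢ Ioo t1 t2)) < ε ∧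
      sSup ((fun p : ℝ × ℝ => |deriv (fun τ => φ p.1 τ) p.2|)
        '' (Ioo x1 x2 ×ˢ Ioo t1 t2)) < ε ∧
      sSup ((fun p : ℝ × ℝ => |deriv (fun τ => ψ p.1 τ) p.2|)
        '' (Ioo x1 x2 ×ˢ Ioo t1 t2)) < ε ∧
      -- (b)
      (∀ p ∈ Ioo x1 x2 ×ˢ Ioo t1 t2,
        -lam1 ≤ deriv (fun y => φ y p.2) p.1 ∧ deriv (fun y => φ y p.2) p.1 ≤ lam2) ∧
      -- (c)
      |(volume {p ∈ Ioo x1 x2 ×ˢ Ioo t1 t2 | deriv (fun y => φ y p.2) p.1 = -lam1}).toReal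
        - lam2 / (lam1 + lam2) * ((x2 - x1) * (t2 - t1))| < ε ∧
      |(volume {p ∈ Ioo x1 x2 ×ˢ Ioo t1 t2 | deriv (fun y => φ y p.2) p.1 = lam2}).toReal
        - lam1 / (lam1 + lam2) * ((x2 - x1) * (t2 - t1))| < ε ∧
      -- (d)
      (∀ p ∈ Ioo x1 x2 ×ˢ Ioo t1 t2, deriv (fun y => ψ y p.2) p.1 = φ p.1 p.2) ∧
      -- (e)
      (∀ t ∈ Ioo t1 t2, (∫ x in x1..x2, φ x t) = 0) := by
  obtain ⟨L, hLd⟩ : ∃ L, L = x2 - x1 := ⟨_, rfl⟩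
  obtain ⟨T, hTd⟩ : ∃ T, T = t2 - t1 := ⟨_, rfl⟩
  have hL : 0 < L := by rw [hLd]; linarith
  have hT : 0 < T := by rw [hTd]; linarith
  obtain ⟨σ, hσ, hσT, hσL⟩ : ∃ σ : ℝ, 0 < σ ∧ 2 * σ < T ∧ 8 * (L * σ) ≤ ε := by
    refine ⟨min (T / 4) (ε / (8 * L)), by positivity, ?_, ?_⟩
    · have := min_le_left (T / 4) (ε / (8 * L)); linarith
    · have := min_le_right (T / 4) (ε / (8 * L))
      rw [le_div_iff₀ (by positivity)] at this
      linarith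
  obtain ⟨η, hη, hηε⟩ : ∃ η : ℝ, 0 < η ∧ η * (L * T) = ε / 4 :=
    ⟨ε / 4 / (L * T), by positivity, by field_simp⟩
  let χ : ContDiffBump ((t1 + t2) / 2) :=
    ⟨T / 2 - σ, T / 2 - σ / 2, by linarith, by linarith⟩
  have hχc : ContDiff ℝ (⊤ : ℕ∞) χ := χ.contDiff
  have hχd : Differentiable ℝ χ := (contDiff_infty_iff_deriv.1 hχc).1
  have hχs : tsupport χ ⊆ Ioo t1 t2 := by
    rw [χ.tsupport_eq, Real.closedBall_eq_Icc]
    intro t ht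
    have e : χ.rOut = T / 2 - σ / 2 := rfl
    rw [e, hTd] at ht
    exact ⟨by linarith [ht.1], by linarith [ht.2]⟩
  have hχ1 : ∀ t ∈ Icc (t1 + σ) (t2 - σ), χ t = 1 := by
    intro t ht
    apply χ.one_of_mem_closedBall
    rw [Real.closedBall_eq_Icc]
    have e : χ.rIn = T / 2 - σ := rfl
    rw [e, hTd]
    exact ⟨by linarith [ht.1], by linarith [ht.2]⟩
  obtain ⟨K, hK⟩ : ∃ K, ∀ t, ‖deriv χ t‖ ≤ K :=
    (χ.hasCompactSupport.deriv).exists_bound_of_continuous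
      (contDiff_infty_iff_deriv.1 hχc).2.continuous
  have hK0 : 0 ≤ K := (norm_nonneg _).trans (hK 0)
  obtain ⟨κ, hκ, hκε⟩ : ∃ κ : ℝ, 0 < κ ∧ (K + 3) * κ = ε :=
    ⟨ε / (K + 3), by positivity, by field_simp⟩
  have hKκ : 0 ≤ K * κ := by positivity
  obtain ⟨G, cG, sG, b0, b1, b2, m1, m2⟩ := good_small lam1 lam2 η x1 x2 κ h1 h2 hη hx hκ
  rw [← hLd] at m1 m2
  have dG := contDiff_infty_iff_deriv.1 cG
  have dG1 := contDiff_infty_iff_deriv.1 dG.2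
  have dφx : ∀ x t, deriv (fun y => χ t * deriv G y) x = χ t * deriv (deriv G) x :=
    fun x t => deriv_const_mul _ (dG1.1 x)
  have hsup : ∀ H : ℝ → ℝ, tsupport H ⊆ Ioo x1 x2 →
      tsupport (fun p : ℝ × ℝ => χ p.2 * H p.1) ⊆ tsupport H ×ˢ tsupport χ := by
    intro H hH
    apply closure_minimal _ ((isClosed_tsupport H).prod (isClosed_tsupport χ))
    intro p hp
    exact ⟨subset_closure (right_ne_zero_of_mul hp), subset_closure (left_ne_zero_of_mul hp)⟩
  have hcs : ∀ H : ℝ → ℝ, tsupport H ⊆ Ioo x1 x2 →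
      HasCompactSupport (fun p : ℝ × ℝ => χ p.2 * H p.1) := by
    intro H hH
    apply HasCompactSupport.of_support_subset_isCompact
      ((isCompact_Icc (a := x1) (b := x2)).prod (isCompact_Icc (a := t1) (b := t2)))
    exact subset_closure.trans ((hsup H hH).trans
      (prod_mono (hH.trans Ioo_subset_Icc_self) (hχs.trans Ioo_subset_Icc_self)))
  have sG1 : tsupport (deriv G) ⊆ Ioo x1 x2 := tsupport_deriv_subset.trans sG
  have hsm : ∀ H : ℝ → ℝ, ContDiff ℝ (⊤ : ℕ∞) H →
      ContDiff ℝ (⊤ : ℕ∞) (fun p : ℝ × ℝ => χ p.2 * H p.1) := fun H hH =>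
    (hχc.comp contDiff_snd).mul (hH.comp contDiff_fst)
  have hχab : ∀ t, |χ t| ≤ 1 := fun t => by
    rw [abs_of_nonneg χ.nonneg]; exact χ.le_one
  have habs : ∀ H : ℝ → ℝ, (∀ x, |H x| ≤ κ) → ∀ x t, |χ t * H x| ≤ κ := by
    intro H hH x t
    rw [abs_mul]
    calc |χ t| * |H x| ≤ 1 * κ := by
          gcongr
          · exact hχab t
          · exact hH x
      _ = κ := one_mul κ
  have hdt : ∀ H : ℝ → ℝ, (∀ x, |H x| ≤ κ) → ∀ x t, |deriv (fun τ => χ τ * H x) t| ≤ K * κ := by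
    intro H hH x t
    rw [deriv_mul_const (hχd t), abs_mul]
    gcongr
    · exact hK t
    · exact hH x
  -- measures
  have hms : ∀ v : ℝ, MeasurableSet
      {p ∈ Ioo x1 x2 ×ˢ Ioo t1 t2 | χ p.2 * deriv (deriv G) p.1 = v} := by
    intro v
    refine (measurableSet_Ioo.prod measurableSet_Ioo).inter (measurableSet_eq_fun ?_ measurable_const)
    exact (hχc.continuous.measurable.comp measurable_snd).mul
      ((measurable_deriv _).comp measurable_fst)
  have hQ : volume.real (Ioo x1 x2 ×ˢ Ioo t1 t2) = L * T := by
    rw [Measure.volume_eq_prod, measureReal_prod_prod, Real.volume_real_Ioo_of_le hx.le,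
      Real.volume_real_Ioo_of_le ht.le, hLd, hTd]
  have hQt : volume (Ioo x1 x2 ×ˢ Ioo t1 t2) ≠ ⊤ := by
    rw [Measure.volume_eq_prod, Measure.prod_prod]
    exact ENNReal.mul_ne_top (by simp) (by simp)
  have hft : ∀ v : ℝ, volume
      {p ∈ Ioo x1 x2 ×ˢ Ioo t1 t2 | χ p.2 * deriv (deriv G) p.1 = v} ≠ ⊤ := fun v =>
    measure_ne_top_of_subset (sep_subset _ _) hQt
  have hlow : ∀ v θ : ℝ, 0 ≤ θ → θ ≤ 1 →
      (θ - η) * L ≤ volume.real {x ∈ Ioo x1 x2 | deriv (deriv G) x = v} →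
      θ * (L * T) - ε / 2 ≤ volume.real
        {p ∈ Ioo x1 x2 ×ˢ Ioo t1 t2 | χ p.2 * deriv (deriv G) p.1 = v} := by
    intro v θ hθ0 hθ1 hm
    have hsub : {x ∈ Ioo x1 x2 | deriv (deriv G) x = v} ×ˢ Icc (t1 + σ) (t2 - σ) ⊆
        {p ∈ Ioo x1 x2 ×ˢ Ioo t1 t2 | χ p.2 * deriv (deriv G) p.1 = v} := by
      rintro p ⟨⟨hp1, hp2⟩, hp3⟩
      refine ⟨⟨hp1, ⟨by linarith [hp3.1], by linarith [hp3.2]⟩⟩, ?_⟩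
      rw [hχ1 _ hp3, one_mul, hp2]
    have h3 := measureReal_mono (μ := volume) hsub (hft v)
    rw [Measure.volume_eq_prod, measureReal_prod_prod,
      Real.volume_real_Icc_of_le (by linarith)] at h3
    refine le_trans ?_ h3
    have e : t2 - σ - (t1 + σ) = T - 2 * σ := by rw [hTd]; ring
    rw [e]
    refine le_trans ?_ (mul_le_mul_of_nonneg_right hm (by linarith))
    have p1 : θ * (L * σ) ≤ L * σ := mul_le_of_le_one_left (by positivity) hθ1
    have p2 : 0 ≤ η * (L * σ) := by positivity
    nlinarith
  have hl1 := hlow (-lam1) (lam2 / (lam1 + lam2)) (by positivity)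
    ((div_le_one (by positivity)).2 (by linarith)) m1
  have hl2 := hlow lam2 (lam1 / (lam1 + lam2)) (by positivity)
    ((div_le_one (by positivity)).2 (by linarith)) m2
  have hsum : lam2 / (lam1 + lam2) * (L * T) + lam1 / (lam1 + lam2) * (L * T) = L * T := by
    field_simp; ring
  have hup : volume.real {p ∈ Ioo x1 x2 ×ˢ Ioo t1 t2 | χ p.2 * deriv (deriv G) p.1 = -lam1} +
      volume.real {p ∈ Ioo x1 x2 ×ˢ Ioo t1 t2 | χ p.2 * deriv (deriv G) p.1 = lam2} ≤ L * T := by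
    rw [← hQ, ← measureReal_union ?_ (hms _) (hft _) (hft _)]
    · exact measureReal_mono (union_subset (sep_subset _ _) (sep_subset _ _)) hQt
    · rw [Set.disjoint_left]
      intro p hp hp'
      have := hp.2.symm.trans hp'.2
      linarith
  refine ⟨fun x t => χ t * deriv G x, fun x t => χ t * G x, hsm _ dG.2, hsm _ cG, hcs _ sG1,
    hcs _ sG, (hsup _ sG1).trans (prod_mono sG1 hχs), (hsup _ sG).trans (prod_mono sG hχs),
    ?_, ?_, ?_, ?_, ?_, ?_, ?_, ?_⟩
  · refine lt_of_le_of_lt (Real.sSup_le (a := 2 * κ) ?_ (by positivity)) (by linarith)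
    rintro _ ⟨p, hp, rfl⟩
    have q1 := habs _ b1 p.1 p.2
    have q2 := habs _ b0 p.1 p.2
    apply Real.sqrt_le_iff.2 ⟨by positivity, ?_⟩
    have r1 := sq_le_sq' (abs_le.1 q1).1 (abs_le.1 q1).2
    have r2 := sq_le_sq' (abs_le.1 q2).1 (abs_le.1 q2).2
    nlinarith [sq_nonneg κ]
  · refine lt_of_le_of_lt (Real.sSup_le (a := K * κ) ?_ (by positivity)) (by linarith)
    rintro _ ⟨p, hp, rfl⟩
    exact hdt _ b1 p.1 p.2
  · refine lt_of_le_of_lt (Real.sSup_le (a := K * κ) ?_ (by positivity)) (by linarith)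
    rintro _ ⟨p, hp, rfl⟩
    exact hdt _ b0 p.1 p.2
  · intro p hp
    simp only [dφx]
    have c0 : 0 ≤ χ p.2 := χ.nonneg
    have c1 : χ p.2 ≤ 1 := χ.le_one
    have := b2 p.1
    constructor <;> nlinarith
  · simp only [dφx]
    rw [← hLd, ← hTd]
    change |volume.real _ - _| < ε
    rw [abs_lt]
    constructor <;> linarith
  · simp only [dφx]
    rw [← hLd, ← hTd]
    change |volume.real _ - _| < ε
    rw [abs_lt]
    constructor <;> linarith
  · intro p hp
    exact deriv_const_mul _ (dG.1 p.1)
  · intro t _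
    rw [intervalIntegral.integral_const_mul, intervalIntegral.integral_deriv_eq_sub
      (fun x _ => dG.1 x) (dG.2.continuous.intervalIntegrable _ _),
      (deriv_zero_of_notMem (fun h => lt_irrefl _ (sG h).2)).1,
      (deriv_zero_of_notMem (fun h => lt_irrefl _ (sG h).1)).1]
    simp
end
end
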